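/- Let (R, m) be an analytically unramified Noetherian local ring with conductor ideal 𝔠. If 𝔠 has finite injective dimension as an R-module, then R is normal; in particular, R is a Gorenstein ring. -/

import Mathlib

open CategoryTheory IsLocalRing

set_option synthInstance.maxHeartbeats 1000000
set_option maxHeartbeats 1000000

noncomputable section

/-- The integral closure `R̄` of `R` in its total ring of fractions, viewed as a type
(with its canonical `R`-algebra and `R`-module structures). -/
abbrev IntClosure (R : Type) [CommRing R] : Type :=
  ↥(integralClosure R (FractionRing R))

/-- The quotient `R`-module `R̄/R`. -/
abbrev IntClosureQuot (R : Type) [CommRing R] : Type :=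
  IntClosure R ⧸ LinearMap.range (Algebra.linearMap R (IntClosure R))

/-- The conductor ideal `𝔠 = Ann_R(R̄/R) = {r : R | r • R̄ ⊆ R}`. -/
def conductorIdeal (R : Type) [CommRing R] : Ideal R :=
  Module.annihilator R (IntClosureQuot R)

/-- A local ring `R` is analytically unramified if its `m`-adic completion is reduced. -/
def AnalyticallyUnramified (R : Type) [CommRing R] [IsLocalRing R] : Prop :=
  IsReduced (AdicCompletion (maximalIdeal R) R)

/-- `R` is normal: it is reduced and equal to its integral closure `R̄` in its total
ring of fractions. -/
def IsNormalRing (R : Type) [CommRing R] : Prop :=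
  IsReduced R ∧ integralClosure R (FractionRing R) = ⊥

/-- `Ext^i_R(M, N)` as a type. -/
abbrev ExtMod (R : Type) [CommRing R] (M : Type) [AddCommGroup M] [Module R M]
    (N : Type) [AddCommGroup N] [Module R N] (i : ℕ) : Type :=
  ↥(((Ext R (ModuleCat.{0} R) i).obj (Opposite.op (ModuleCat.of R M))).obj (ModuleCat.of R N))

/-- `M` has finite projective dimension over `R`:
`Ext^i_R(M, -)` vanishes for all `i` bigger than some `n`. -/
def HasFiniteProjDim (R : Type) [CommRing R] (M : Type) [AddCommGroup M] [Module R M] : Prop :=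
  ∃ n : ℕ, ∀ (N : ModuleCat.{0} R) (i : ℕ), n < i →
    Subsingleton ↥(((Ext R (ModuleCat.{0} R) i).obj (Opposite.op (ModuleCat.of R M))).obj N)

/-- `M` has finite injective dimension over `R`:
`Ext^i_R(-, M)` vanishes for all `i` bigger than some `n`. -/
def HasFiniteInjDim (R : Type) [CommRing R] (M : Type) [AddCommGroup M] [Module R M] : Prop :=
  ∃ n : ℕ, ∀ (N : ModuleCat.{0} R) (i : ℕ), n < i →
    Subsingleton ↥(((Ext R (ModuleCat.{0} R) i).obj (Opposite.op N)).obj (ModuleCat.of R M))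

/-- The depth of an `R`-module `M` over a local ring `(R, m)`: the least `i` such that
`Ext^i_R(R/m, M) ≠ 0` (`⊤` if there is no such `i`), valued in `WithBot (WithTop ℕ)`
for easy comparison with `ringKrullDim`. -/
def moduleDepth (R : Type) [CommRing R] [IsLocalRing R]
    (M : Type) [AddCommGroup M] [Module R M] : WithBot (WithTop ℕ) :=
  sInf { n : WithBot (WithTop ℕ) |
    ∃ i : ℕ, n = (i : ℕ) ∧ Nontrivial (ExtMod R (ResidueField R) M i) }

/-- A Noetherian local ring is Gorenstein if it has finite injective dimension
as a module over itself. -/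
def IsGorensteinLocal (R : Type) [CommRing R] [IsLocalRing R] : Prop :=
  IsNoetherianRing R ∧ HasFiniteInjDim R R

/-- A Noetherian local ring is Cohen–Macaulay if its depth equals its Krull dimension. -/
def IsCohenMacaulayLocal (R : Type) [CommRing R] [IsLocalRing R] : Prop :=
  IsNoetherianRing R ∧ moduleDepth R R = ringKrullDim R

/-- A ring is Cohen–Macaulay if it is Noetherian and all its localizations at primes
are Cohen–Macaulay local rings. -/
def IsCohenMacaulayRing (A : Type) [CommRing A] : Prop :=
  IsNoetherianRing A ∧ ∀ (p : Ideal A) [p.IsPrime],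
    moduleDepth (Localization.AtPrime p) (Localization.AtPrime p) =
      ringKrullDim (Localization.AtPrime p)

/-- Serre's condition `(S2)`: `depth (R_p) ≥ min {2, height p}` for every prime `p`
(`height p` being the dimension of `R_p`). -/
def SerreS2 (R : Type) [CommRing R] : Prop :=
  ∀ (p : Ideal R) [p.IsPrime],
    min 2 (ringKrullDim (Localization.AtPrime p)) ≤
      moduleDepth (Localization.AtPrime p) (Localization.AtPrime p)

/-- A Noetherian local ring is regular if its maximal ideal can be generated by
`dim R` elements. -/
def IsRegularLocal (A : Type) [CommRing A] [IsLocalRing A] : Prop :=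
  IsNoetherianRing A ∧ ∃ s : Finset A, Ideal.span (s : Set A) = maximalIdeal A ∧
    (s.card : WithBot (WithTop ℕ)) = ringKrullDim A

/-- Serre's condition `(R1)`: `R_p` is regular for every prime `p` of height at most `1`. -/
def SerreR1 (R : Type) [CommRing R] : Prop :=
  ∀ (p : Ideal R) [p.IsPrime], ringKrullDim (Localization.AtPrime p) ≤ 1 →
    IsRegularLocal (Localization.AtPrime p)

/-- The `i`-th local cohomology `H^i_m(M)` of `M` with support in the maximal ideal,
as a type. -/
abbrev localCohMod (R : Type) [CommRing R] [IsLocalRing R] (i : ℕ)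
    (M : Type) [AddCommGroup M] [Module R M] : Type :=
  ↥((localCohomology (maximalIdeal R) i).obj (ModuleCat.of R M))

/-- `x : Fin d → R` is a system of parameters for the local ring `(R, m)`:
`d = dim R`, all `x i` lie in `m`, and the ideal they generate is `m`-primary
(its radical is `m`). -/
def IsSystemOfParameters (R : Type) [CommRing R] [IsLocalRing R] {d : ℕ}
    (x : Fin d → R) : Prop :=
  (d : WithBot (WithTop ℕ)) = ringKrullDim R ∧ (∀ i, x i ∈ maximalIdeal R) ∧
    (Ideal.span (Set.range x)).radical = maximalIdeal R

/-- `E` is an injective hull of the residue field of the local ring `R`: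
`E` is injective and contains a copy of `R/m` as an essential submodule. -/
def IsInjectiveHullOfResidueField (R : Type) [CommRing R] [IsLocalRing R]
    (E : Type) [AddCommGroup E] [Module R E] : Prop :=
  Module.Injective R E ∧ ∃ f : ResidueField R →ₗ[R] E, Function.Injective f ∧
    ∀ N : Submodule R E, N ≠ ⊥ → N ⊓ LinearMap.range f ≠ ⊥

set_option linter.unusedSectionVars false
set_option linter.style.haveILetI false
namespace Pf
open Abelian

section homological
variable {R : Type} [CommRing R]

lemma sesShort {A B C : Type} [AddCommGroup A] [AddCommGroup B] [AddCommGroup C]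
    [Module R A] [Module R B] [Module R C] (f : A →ₗ[R] B) (g : B →ₗ[R] C)
    (hf : Function.Injective f) (hg : Function.Surjective g) (h : Function.Exact f g) :
    (ShortComplex.mk (ModuleCat.ofHom f) (ModuleCat.ofHom g)
      (by ext x; simp [h.apply_apply_eq_zero])).ShortExact where
  exact := by
    rw [ShortComplex.ShortExact.moduleCat_exact_iff_function_exact]
    exact h
  mono_f := by rw [ModuleCat.mono_iff_injective]; exact hf
  epi_g := by rw [ModuleCat.epi_iff_surjective]; exact hg

lemma ext_subsingleton_of_old (N M : ModuleCat.{0} R) (n : ℕ)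
    (h : Subsingleton (((_root_.Ext R (ModuleCat.{0} R) (n+1)).obj (Opposite.op N)).obj M)) :
    Subsingleton (Abelian.Ext N M (n+1)) := by
  let P := projectiveResolution N
  have hz := (ModuleCat.isZero_of_subsingleton
    (((_root_.Ext R (ModuleCat.{0} R) (n+1)).obj (Opposite.op N)).obj M)).of_iso (P.isoExt (n+1) M).symm
  rw [← HomologicalComplex.exactAt_iff_isZero_homology,
    HomologicalComplex.exactAt_iff' _ n (n+1) (n+2) (by simp) (by simp)] at hz
  rw [ShortComplex.moduleCat_exact_iff] at hz
  refine subsingleton_of_forall_eq 0 fun e => ?_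
  obtain ⟨f, hf, rfl⟩ := P.extMk_surjective e (n+2) rfl
  rw [P.extMk_eq_zero_iff f (n+2) rfl hf n rfl]
  obtain ⟨g, hg⟩ := hz f hf
  exact ⟨g, hg⟩

lemma nakayama_prime {E : Type*} [AddCommGroup E] [Module R E] [Module.Finite R E] (p : Ideal R)
    [p.IsPrime] (y : R) (hy : y ∈ p) (h : ∀ e : E, ∃ s ∉ p, ∃ e' : E, s • e = y • e') :
    ∃ s ∉ p, ∀ e : E, s • e = 0 := by
  classical
  obtain ⟨S, hS⟩ := (Module.Finite.fg_top : (⊤ : Submodule R E).FG)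
  choose s hs e' he' using h
  have hs' : ∏ e ∈ S, s e ∉ p := by
    intro h
    obtain ⟨i, -, hi⟩ := (Ideal.IsPrime.prod_mem_iff (p := p)).1 h
    exact hs i hi
  set t := ∏ e ∈ S, s e
  have hr : LinearMap.range (LinearMap.lsmul R E t) ≤ (Ideal.span {y}) • (⊤ : Submodule R E) := by
    rw [LinearMap.range_eq_map, ← hS, Submodule.map_span_le]
    intro e he
    have : t • e = y • ((∏ e ∈ S.erase e, s e) • e' e) := by
      rw [smul_comm, ← he', smul_smul]
      congr 1
      exact (Finset.prod_erase_mul _ _ he).symm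
    simp only [LinearMap.lsmul_apply]
    rw [this]
    refine Submodule.smul_mem_smul (Ideal.mem_span_singleton_self y) ?_
    rw [hS]; trivial
  obtain ⟨P, hP, hdeg, hc, h0⟩ := LinearMap.exists_monic_and_natDegree_eq_and_coeff_mem_pow_and_aeval_eq_zero R
    (LinearMap.lsmul R E t) (Ideal.span {y}) hr
  refine ⟨P.eval t, ?_, ?_⟩
  · intro hmem
    apply hs'
    have h1 : P.eval t = t ^ P.natDegree + ∑ i ∈ Finset.range P.natDegree, P.coeff i * t ^ i := by
      conv_lhs => rw [hP.as_sum]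
      simp [Polynomial.eval_finsetSum]
    rw [h1] at hmem
    have h2 : ∑ i ∈ Finset.range P.natDegree, P.coeff i * t ^ i ∈ p := by
      refine Ideal.sum_mem _ fun i hi => Ideal.mul_mem_right _ _ ?_
      have := hc i
      have hle : Ideal.span {y} ^ (P.natDegree - i) ≤ p := by
        refine (Ideal.pow_le_self ?_).trans ((Ideal.span_singleton_le_iff_mem _).2 hy)
        have := Finset.mem_range.1 hi
        omega
      exact hle (by convert this using 2; try omega)
    exact Ideal.IsPrime.mem_of_pow_mem ‹_› _ ((Ideal.add_mem_iff_left _ h2).1 hmem)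
  · intro e
    have := congrArg (fun f => f e) h0
    simp only [LinearMap.zero_apply] at this
    rw [← this]
    have key : ∀ Q : Polynomial R, Q.eval t • e = (Polynomial.aeval (LinearMap.lsmul R E t) Q) e := by
      intro Q
      have : LinearMap.lsmul R E t = algebraMap R (Module.End R E) t := rfl
      rw [this, Polynomial.aeval_algebraMap_apply_eq_algebraMap_eval]
      rfl
    exact key P

end homological
end Pf

namespace Pf
open Abelian

section homological
variable {R : Type} [CommRing R]

/-- every element of Ext is killed by something outside of p -/
def Killed (p : Ideal R) (N M : ModuleCat.{0} R) (n : ℕ) : Prop :=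
  ∀ e : Abelian.Ext N M n, ∃ s ∉ p, s • e = 0

lemma Killed.middle {p : Ideal R} [p.IsPrime] {S : ShortComplex (ModuleCat.{0} R)} (hS : S.ShortExact)
    {M : ModuleCat.{0} R} {n : ℕ} (h1 : Killed p S.X₁ M n) (h3 : Killed p S.X₃ M n) :
    Killed p S.X₂ M n := by
  intro e
  obtain ⟨s, hs, h⟩ := h1 ((Ext.mk₀ S.f).comp e (zero_add n))
  rw [← Ext.comp_smul] at h
  obtain ⟨e3, he3⟩ := Ext.contravariant_sequence_exact₂ hS M _ h
  obtain ⟨t, ht, h'⟩ := h3 e3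
  refine ⟨t * s, fun hh => (Ideal.IsPrime.mem_or_mem ‹_› hh).elim ht hs, ?_⟩
  rw [mul_smul, ← he3, ← Ext.comp_smul, h', Ext.comp_zero]

lemma smul_eq_mk₀_comp {N M : ModuleCat.{0} R} {n : ℕ} (r : R) (e : Abelian.Ext N M n) :
    r • e = (Ext.mk₀ (r • 𝟙 N)).comp e (zero_add n) := by
  rw [Ext.mk₀_smul, Ext.smul_comp, Ext.mk₀_id_comp]

lemma Killed.of_smul_id {p : Ideal R} {N M : ModuleCat.{0} R} {n : ℕ} (s : R) (hs : s ∉ p)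
    (h : s • 𝟙 N = 0) : Killed p N M n := by
  intro e
  refine ⟨s, hs, ?_⟩
  rw [smul_eq_mk₀_comp, h, Ext.mk₀_zero, Ext.zero_comp]

lemma Killed.of_iso {p : Ideal R} {N N' M : ModuleCat.{0} R} (i : N ≅ N') {n : ℕ} (h : Killed p N M n) :
    Killed p N' M n := by
  intro e
  obtain ⟨s, hs, h⟩ := h ((Ext.mk₀ i.hom).comp e (zero_add n))
  refine ⟨s, hs, ?_⟩
  have := congrArg (fun e => (Ext.mk₀ i.inv).comp e (zero_add n)) h
  simpa [← Ext.comp_smul] using this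

lemma sesMul (x : R) (hx : x ∈ nonZeroDivisors R) :
    Function.Injective (LinearMap.mulLeft R x) ∧
    Function.Surjective (Submodule.mkQ (Ideal.span {x})) ∧
    Function.Exact (LinearMap.mulLeft R x) (Submodule.mkQ (Ideal.span {x})) := by
  refine ⟨?_, Submodule.mkQ_surjective _, ?_⟩
  · intro a b h
    simpa [mul_cancel_left_mem_nonZeroDivisors hx] using h
  · intro y
    rw [Submodule.mkQ_apply, Submodule.Quotient.mk_eq_zero, Ideal.mem_span_singleton]
    constructor
    · rintro ⟨c, rfl⟩; exact ⟨c, rfl⟩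
    · rintro ⟨c, rfl⟩; exact ⟨c, rfl⟩

theorem partIII [IsNoetherianRing R] (M : ModuleCat.{0} R) [Module.Finite R M] (x : R)
    (hx : x ∈ nonZeroDivisors R) (hxM : ∀ m : M, x • m = 0 → m = 0) (p : Ideal R) [p.IsPrime]
    (hxp : x ∈ p) (a : R) (ha : ∀ r, r * a ∈ Ideal.span {x} ↔ r ∈ p) (U : M ⟶ M)
    (hU : a • 𝟙 M = x • U) (hM : ∃ m : M, ∀ s ∉ p, s • m ≠ 0)
    (hfin : ∃ n, ∀ N : ModuleCat.{0} R, ∀ i, n < i → Subsingleton (Abelian.Ext N M i)) : False := by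
  have hS := sesShort _ _ (sesMul x hx).1 (sesMul x hx).2.1 (sesMul x hx).2.2
  -- step
  have step : ∀ n, 1 ≤ n → (∀ N : ModuleCat.{0} R, Module.Finite R N → Killed p N M (n+1)) →
      ∀ N : ModuleCat.{0} R, Module.Finite R N → Killed p N M n := by
    intro n hn hQ
    have main : ∀ q : Ideal R, q.IsPrime → Killed p (ModuleCat.of R (R ⧸ q)) M n := by
      intro q hq
      by_cases hqp : q ≤ p
      swap
      · obtain ⟨s, hs, hs'⟩ := Set.not_subset.1 hqp
        refine Killed.of_smul_id s hs' ?_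
        apply ModuleCat.hom_ext; apply LinearMap.ext; intro r
        obtain ⟨r, rfl⟩ := Ideal.Quotient.mk_surjective r
        change s • (Ideal.Quotient.mk q r) = 0
        rw [← Ideal.Quotient.mk_eq_mk, ← Submodule.Quotient.mk_smul, Submodule.Quotient.mk_eq_zero]
        exact Ideal.mul_mem_right _ _ hs
      rcases hqp.eq_or_lt with rfl | hlt
      · -- q = p
        let φ : (R ⧸ q) →ₗ[R] (R ⧸ Ideal.span {x}) :=
          Submodule.mapQ q (Ideal.span {x}) (LinearMap.mulRight R a) (fun r hr => (ha r).2 hr)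
        have hφ : Function.Injective φ := by
          rw [← LinearMap.ker_eq_bot, LinearMap.ker_eq_bot']
          intro m hm
          obtain ⟨r, rfl⟩ := Submodule.mkQ_surjective _ m
          have : (Submodule.Quotient.mk (r * a) : R ⧸ Ideal.span {x}) = 0 := hm
          rw [Submodule.Quotient.mk_eq_zero] at this
          exact (Submodule.Quotient.mk_eq_zero _).2 ((ha r).1 this)
        have hT := sesShort φ (LinearMap.range φ).mkQ hφ (Submodule.mkQ_surjective _)
          (by intro y; simp)
        let π : (R ⧸ Ideal.span {x}) →ₗ[R] (R ⧸ q) :=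
          Submodule.factor ((Ideal.span_singleton_le_iff_mem _).2 hxp)
        have hπ : Function.Surjective π := Submodule.factor_surjective _
        have hK := LinearMap.shortExact_shortComplexKer hπ
        intro e
        obtain ⟨s, hs, h⟩ := hQ (ModuleCat.of R ((R ⧸ Ideal.span {x}) ⧸ LinearMap.range φ)) inferInstance
          (hT.extClass.comp e (add_comm 1 n))
        refine ⟨s, hs, ?_⟩
        rw [← Ext.comp_smul] at h
        obtain ⟨e2, he2⟩ := Ext.contravariant_sequence_exact₁ hT M _ _ h
        rw [← he2]
        obtain ⟨k, rfl⟩ : ∃ k, n = k + 1 := ⟨n - 1, by omega⟩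
        have hxe : ∀ e' : Abelian.Ext (ModuleCat.of R (R ⧸ Ideal.span {x})) M (k+1), x • e' = 0 := by
          intro e'
          have : x • 𝟙 (ModuleCat.of R (R ⧸ Ideal.span {x})) = 0 := by
            apply ModuleCat.hom_ext; apply LinearMap.ext; intro r
            obtain ⟨r, rfl⟩ := Submodule.mkQ_surjective _ r
            change x • Submodule.mkQ (Ideal.span {x}) r = 0
            rw [← map_smul]
            exact (Submodule.Quotient.mk_eq_zero _).2
              (Ideal.mul_mem_right _ _ (Ideal.mem_span_singleton_self x))
          rw [smul_eq_mk₀_comp, this, Ext.mk₀_zero, Ext.zero_comp]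
        rcases Nat.eq_zero_or_pos k with rfl | hk
        · -- n = 1
          set w := (Ext.mk₀ (ModuleCat.ofHom φ)).comp e2 (zero_add (0+1)) with hw
          have h1 : (Ext.mk₀ (ModuleCat.ofHom π)).comp w (zero_add (0+1)) = 0 := by
            rw [hw, Ext.mk₀_comp_mk₀_assoc]
            have : ModuleCat.ofHom π ≫ ModuleCat.ofHom φ = a • 𝟙 _ := by
              apply ModuleCat.hom_ext; apply LinearMap.ext; intro r
              obtain ⟨r, rfl⟩ := Submodule.mkQ_surjective _ r
              change Submodule.mkQ (Ideal.span {x}) (r * a) = a • Submodule.mkQ (Ideal.span {x}) r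
              rw [← map_smul, smul_eq_mul, mul_comm]
            rw [this, ← smul_eq_mk₀_comp, Ext.smul_eq_comp_mk₀, hU, Ext.mk₀_smul, Ext.comp_smul]
            exact hxe _
          obtain ⟨z, hz⟩ := Ext.contravariant_sequence_exact₃ hK M w h1 (n₀ := 0) rfl
          obtain ⟨z, rfl⟩ := Ext.addEquiv₀.symm.surjective z
          have : z = 0 := by
            ext ⟨r, hr⟩
            obtain ⟨r, rfl⟩ := Submodule.mkQ_surjective _ r
            apply hxM
            have h0 : x • (⟨Submodule.mkQ _ r, hr⟩ : LinearMap.ker π) = 0 := by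
              ext
              change x • Submodule.mkQ _ r = 0
              rw [← map_smul]
              exact (Submodule.Quotient.mk_eq_zero _).2
                (Ideal.mul_mem_right _ _ (Ideal.mem_span_singleton_self x))
            rw [← map_smul]
            change z.hom (x • (⟨Submodule.mkQ _ r, hr⟩ : LinearMap.ker π)) = 0
            rw [h0, map_zero]
          rw [← hz, this, map_zero, Ext.comp_zero]
        · obtain ⟨l, rfl⟩ : ∃ l, k = l + 1 := ⟨k - 1, by omega⟩
          obtain ⟨z, hz⟩ := Ext.contravariant_sequence_exact₃ hS M e2
            (Ext.eq_zero_of_projective (P := ModuleCat.of R R) _) (n₀ := l+1) (by omega)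
          have : z = 0 := Ext.eq_zero_of_projective (P := ModuleCat.of R R) _
          rw [← hz, this, Ext.comp_zero, Ext.comp_zero]
      · -- q < p
        obtain ⟨y, hyp, hyq⟩ := Set.exists_of_ssubset hlt
        have : Module.Finite R (Abelian.Ext (ModuleCat.of R (R ⧸ q)) M n) := inferInstance
        let f : (R ⧸ q) →ₗ[R] (R ⧸ q) := LinearMap.lsmul R (R ⧸ q) y
        have hf : Function.Injective f := by
          rw [← LinearMap.ker_eq_bot, LinearMap.ker_eq_bot']
          intro m hm
          obtain ⟨r, rfl⟩ := Submodule.mkQ_surjective _ m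
          have : (Submodule.Quotient.mk (y * r) : R ⧸ q) = 0 := hm
          rw [Submodule.Quotient.mk_eq_zero] at this
          exact (Submodule.Quotient.mk_eq_zero _).2 ((hq.mem_or_mem this).resolve_left hyq)
        have hT := sesShort f (LinearMap.range f).mkQ hf (Submodule.mkQ_surjective _)
          (by intro y; simp)
        obtain ⟨s, hs, h⟩ := nakayama_prime (E := Abelian.Ext (ModuleCat.of R (R ⧸ q)) M n) p y hyp (by
          intro e
          obtain ⟨s, hs, h⟩ := hQ (ModuleCat.of R ((R ⧸ q) ⧸ LinearMap.range f)) inferInstance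
            (hT.extClass.comp e (add_comm 1 n))
          rw [← Ext.comp_smul] at h
          obtain ⟨e2, he2⟩ := Ext.contravariant_sequence_exact₁ hT M _ _ h
          refine ⟨s, hs, e2, ?_⟩
          rw [← he2, smul_eq_mk₀_comp]
          rfl)
        exact fun e => ⟨s, hs, h e⟩
    intro N hN
    refine IsNoetherianRing.induction_on_isQuotientEquivQuotientPrime R hN
      (motive := fun N _ _ _ => Killed p (ModuleCat.of R N) M n) ?_ ?_ ?_
    · intro N _ _ _ _
      refine Killed.of_smul_id 1 (p.ne_top_iff_one.1 (Ideal.IsPrime.ne_top ‹_›)) ?_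
      ext r
      exact Subsingleton.elim _ _
    · intro N _ _ _ q i
      exact (main q.1 q.2).of_iso i.symm.toModuleIso
    · intro N₁ _ _ _ N₂ _ _ _ N₃ _ _ _ f g hf hg hfg h1 h3
      exact Killed.middle (sesShort f g hf hg hfg) h1 h3
  obtain ⟨n, hn⟩ := hfin
  have desc : ∀ k j, j + k = n + 1 → ∀ N : ModuleCat.{0} R, Module.Finite R N → Killed p N M (j + 1) := by
    intro k
    induction k with
    | zero =>
      intro j hj N _ e
      have := hn N (j+1) (by omega)
      exact ⟨1, p.ne_top_iff_one.1 (Ideal.IsPrime.ne_top ‹_›), Subsingleton.elim _ _⟩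
    | succ k ih =>
      intro j hj
      exact step (j+1) (by omega) (ih (j+1) (by omega))
  have h1 := desc (n+1) 0 (by omega) (ModuleCat.of R (R ⧸ Ideal.span {x})) inferInstance
  obtain ⟨s, hs, h⟩ := nakayama_prime (E := M) p x hxp (by
    intro m
    let hm : ModuleCat.of R R ⟶ M := ModuleCat.ofHom (LinearMap.toSpanSingleton R M m)
    obtain ⟨s, hs, h⟩ := h1 (hS.extClass.comp (Ext.mk₀ hm) rfl)
    rw [← Ext.comp_smul] at h
    obtain ⟨e2, he2⟩ := Ext.contravariant_sequence_exact₁ hS M _ _ h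
    obtain ⟨z, rfl⟩ := Ext.addEquiv₀.symm.surjective e2
    refine ⟨s, hs, z.hom (1:R), ?_⟩
    rw [← Ext.mk₀_smul] at he2
    have h3 : ModuleCat.ofHom (LinearMap.mulLeft R x) ≫ z = s • hm := by
      apply Ext.addEquiv₀.symm.injective
      exact (Ext.mk₀_comp_mk₀ _ _).symm.trans he2
    have h4 := congrArg (fun f => f.hom (1:R)) h3
    have h5 : z.hom (x * 1) = s • ((1:R) • m) := h4
    rw [one_smul] at h5
    rw [← h5, ← smul_eq_mul, map_smul])
  obtain ⟨m, hm⟩ := hM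
  exact hm s hs (h m)
end homological
end Pf

namespace Pf
open Abelian

section final
variable {R : Type} [CommRing R]

lemma mem_conductor {r : R} : r ∈ conductorIdeal R ↔
    ∀ u : FractionRing R, IsIntegral R u → ∃ s : R, algebraMap R (FractionRing R) s = r • u := by
  rw [conductorIdeal, Module.mem_annihilator]
  constructor
  · intro h u hu
    have := h (Submodule.Quotient.mk ⟨u, hu⟩)
    rw [← Submodule.Quotient.mk_smul, Submodule.Quotient.mk_eq_zero] at this
    obtain ⟨s, hs⟩ := this
    exact ⟨s, congrArg Subtype.val hs⟩
  · intro h m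
    obtain ⟨⟨u, hu⟩, rfl⟩ := Submodule.mkQ_surjective _ m
    obtain ⟨s, hs⟩ := h u hu
    rw [← map_smul]
    exact (Submodule.Quotient.mk_eq_zero _).2 ⟨s, Subtype.ext hs⟩

lemma exists_nzd_conductor (hfin : Module.Finite R (IntClosure R)) :
    ∃ x ∈ conductorIdeal R, x ∈ nonZeroDivisors R := by
  obtain ⟨S, hS⟩ := hfin.fg_top
  obtain ⟨b, hb⟩ := IsLocalization.exist_integer_multiples (nonZeroDivisors R) S
    (fun u => (u : FractionRing R))
  refine ⟨b, ?_, b.2⟩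
  rw [mem_conductor]
  intro u hu
  have hle : (⊤ : Submodule R (IntClosure R)) ≤
      ((LinearMap.range (Algebra.linearMap R (IntClosure R))).comap
        (LinearMap.lsmul R (IntClosure R) (b : R))) := by
    rw [← hS, Submodule.span_le]
    intro v hv
    obtain ⟨s, hs⟩ := hb v hv
    exact ⟨s, Subtype.ext hs⟩
  obtain ⟨s, hs⟩ := hle (Submodule.mem_top (x := ⟨u, hu⟩))
  exact ⟨s, congrArg Subtype.val hs⟩

theorem normal_of_finite [IsNoetherianRing R] (hfin : Module.Finite R (IntClosure R))
    (hid : HasFiniteInjDim R ↥(conductorIdeal R)) :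
    integralClosure R (FractionRing R) = ⊥ := by
  by_contra hne
  obtain ⟨x, hxc, hx⟩ := exists_nzd_conductor hfin
  have hinj := IsFractionRing.injective R (FractionRing R)
  have hnt : Nontrivial (IntClosureQuot R) := by
    rw [Submodule.Quotient.nontrivial_iff]
    intro htop
    apply hne
    rw [eq_bot_iff]
    intro u hu
    have : (⟨u, hu⟩ : IntClosure R) ∈ LinearMap.range (Algebra.linearMap R (IntClosure R)) := by
      rw [htop]; trivial
    obtain ⟨s, hs⟩ := this
    exact ⟨s, congrArg Subtype.val hs⟩
  obtain ⟨p, hp⟩ := associatedPrimes.nonempty R (IntClosureQuot R)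
  obtain ⟨hpp, v, hv⟩ := isAssociatedPrime_iff.1 hp
  obtain ⟨⟨u, hu⟩, rfl⟩ := Submodule.mkQ_surjective _ v
  have hp' : ∀ r, r ∈ p ↔ ∃ s : R, algebraMap R (FractionRing R) s = r • u := by
    intro r
    rw [hv, Submodule.mem_colon_singleton, Submodule.mem_bot, ← map_smul, Submodule.mkQ_apply,
      Submodule.Quotient.mk_eq_zero]
    constructor
    · rintro ⟨s, hs⟩; exact ⟨s, congrArg Subtype.val hs⟩
    · rintro ⟨s, hs⟩; exact ⟨s, Subtype.ext hs⟩
  have hxp : x ∈ p := (hp' x).2 (mem_conductor.1 hxc u hu)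
  obtain ⟨a, ha⟩ := mem_conductor.1 hxc u hu
  have hxu : IsUnit (algebraMap R (FractionRing R) x) := IsLocalization.map_units (M := nonZeroDivisors R) _ ⟨x, hx⟩
  have hUex : ∀ m : conductorIdeal R, ∃ n : conductorIdeal R,
      algebraMap R (FractionRing R) n = (m : R) • u := by
    rintro ⟨m, hm⟩
    obtain ⟨n, hn⟩ := mem_conductor.1 hm u hu
    refine ⟨⟨n, ?_⟩, hn⟩
    rw [mem_conductor]
    intro w hw
    obtain ⟨s, hs⟩ := mem_conductor.1 hm (u * w) (hu.mul hw)
    refine ⟨s, ?_⟩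
    rw [hs, Algebra.smul_def n, hn, smul_mul_assoc]
  choose Uf hUf using hUex
  let U : conductorIdeal R →ₗ[R] conductorIdeal R :=
    { toFun := Uf
      map_add' := by
        intro m n
        apply Subtype.ext; apply hinj
        simp only [Submodule.coe_add, map_add, hUf, add_smul]
      map_smul' := by
        intro r m
        apply Subtype.ext; apply hinj
        simp only [Submodule.coe_smul, smul_eq_mul, map_mul, hUf, RingHom.id_apply, mul_smul]
        rw [← Algebra.smul_def] }
  refine partIII (ModuleCat.of R (conductorIdeal R)) x hx ?_ p hxp a ?_ (ModuleCat.ofHom U) ?_ ?_ ?_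
  · rintro ⟨m, hm⟩ h
    have : x * m = 0 := congrArg Subtype.val h
    exact Subtype.ext ((mul_left_mem_nonZeroDivisors_eq_zero_iff hx).1 this)
  · intro r
    rw [hp', Ideal.mem_span_singleton]
    constructor
    · rintro ⟨c, hc⟩
      refine ⟨c, hxu.mul_left_cancel ?_⟩
      rw [← map_mul, ← hc, map_mul, ha, Algebra.smul_def, Algebra.smul_def]; ring
    · rintro ⟨c, hc⟩
      refine ⟨c, hinj ?_⟩
      rw [map_mul, map_mul, hc, ha, Algebra.smul_def, Algebra.smul_def]; ring
  · apply ModuleCat.hom_ext; apply LinearMap.ext; intro m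
    apply Subtype.ext; apply hinj
    change algebraMap R (FractionRing R) (a * (m : R)) = algebraMap R (FractionRing R) (x * (Uf m : R))
    rw [map_mul, map_mul, hUf, ha, Algebra.smul_def, Algebra.smul_def]; ring
  · refine ⟨⟨x, hxc⟩, fun s hs h => hs ?_⟩
    have : s * x = 0 := congrArg Subtype.val h
    rw [(mul_right_mem_nonZeroDivisors_eq_zero_iff hx).1 this]
    exact zero_mem _
  · obtain ⟨n, hn⟩ := hid
    refine ⟨n, fun N i hi => ?_⟩
    obtain ⟨j, rfl⟩ : ∃ j, i = j + 1 := ⟨i - 1, by omega⟩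
    exact ext_subsingleton_of_old N _ j (hn N (j+1) hi)

theorem gor_of_normal (h : integralClosure R (FractionRing R) = ⊥)
    (hid : HasFiniteInjDim R ↥(conductorIdeal R)) : HasFiniteInjDim R R := by
  have htop : conductorIdeal R = ⊤ := by
    rw [eq_top_iff]
    intro r _
    rw [mem_conductor]
    intro u hu
    have : u ∈ integralClosure R (FractionRing R) := hu
    rw [h] at this
    obtain ⟨s, hs⟩ := this
    refine ⟨r * s, ?_⟩
    rw [map_mul, Algebra.smul_def, ← hs]; rfl
  obtain ⟨n, hn⟩ := hid
  refine ⟨n, fun N i hi => ?_⟩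
  have := hn N i hi
  let e : conductorIdeal R ≃ₗ[R] R := (LinearEquiv.ofEq _ _ htop).trans Submodule.topEquiv
  exact ((((Ext R (ModuleCat.{0} R) i).obj (Opposite.op N)).mapIso e.toModuleIso).toLinearEquiv.symm.toEquiv).subsingleton

theorem stmt_of_finite [IsLocalRing R] [IsNoetherianRing R] (hred : IsReduced R)
    (hfin : Module.Finite R (IntClosure R))
    (hid : HasFiniteInjDim R ↥(conductorIdeal R)) :
    IsNormalRing R ∧ IsGorensteinLocal R :=
  ⟨⟨hred, normal_of_finite hfin hid⟩, inferInstance, gor_of_normal (normal_of_finite hfin hid) hid⟩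

lemma reduced_of_au [IsLocalRing R] [IsNoetherianRing R] (hau : AnalyticallyUnramified R) : IsReduced R := by
  have : IsReduced (AdicCompletion (maximalIdeal R) R) := hau
  refine isReduced_of_injective (algebraMap R (AdicCompletion (maximalIdeal R) R)) ?_
  exact AdicCompletion.of_injective (maximalIdeal R) R
end final
end Pf

namespace Pf

universe u v
section lengths

variable {B : Type u} [CommRing B] {Q : Type v} [AddCommGroup Q] [Module B Q]

lemma len_add (f : Q →ₗ[B] Q) : Module.length B Q =
    Module.length B (LinearMap.ker f) + Module.length B (LinearMap.range f) :=
  Module.length_eq_add_of_exact (LinearMap.ker f).subtype f.rangeRestrict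
    (Submodule.subtype_injective _) f.surjective_rangeRestrict
    (by rw [LinearMap.exact_iff, LinearMap.ker_rangeRestrict]; simp)

lemma fl_killed [IsLocalRing B] {M : Type v} [AddCommGroup M] [Module B M] [Module.Finite B M]
    (h : ∀ y ∈ maximalIdeal B, ∀ q : M, y • q = 0) : IsFiniteLength B M := by
  have ht : Module.IsTorsionBySet B M (maximalIdeal B : Set B) := fun q y => h y y.2 q
  letI : Module (B ⧸ maximalIdeal B) M := ht.module
  letI : Field (B ⧸ maximalIdeal B) := Ideal.Quotient.field _
  haveI : IsScalarTower B (B ⧸ maximalIdeal B) M := ht.isScalarTower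
  haveI : Module.Finite (B ⧸ maximalIdeal B) M := Module.Finite.of_restrictScalars_finite B _ M
  rw [← Module.length_ne_top_iff]
  have := Module.length_eq_of_surjective (R := B ⧸ maximalIdeal B) (S := B) (M := M)
    Ideal.Quotient.mk_surjective
  rw [this]
  exact Module.length_ne_top

lemma fl_pow [IsLocalRing B] [IsNoetherianRing B] (N : ℕ) :
    ∀ {M : Type v} [AddCommGroup M] [Module B M] [Module.Finite B M]
    (_ : ∀ y ∈ maximalIdeal B ^ N, ∀ q : M, y • q = 0), IsFiniteLength B M := by
  induction N with
  | zero =>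
    intro M _ _ _ h
    have : Subsingleton M := ⟨fun a b => by
      have ha := h 1 (by simp) a
      have hb := h 1 (by simp) b
      simp at ha hb; rw [ha, hb]⟩
    exact IsFiniteLength.of_subsingleton
  | succ N ih =>
    intro M _ _ _ h
    let M1 : Submodule B M := (maximalIdeal B ^ N) • ⊤
    have h1 : IsFiniteLength B M1 := by
      apply fl_killed
      rintro y hy ⟨q, hq⟩
      ext
      simp only [SetLike.mk_smul_mk, ZeroMemClass.coe_zero]
      refine Submodule.smul_induction_on hq ?_ ?_
      · intro r hr n _
        rw [smul_smul]
        apply h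
        rw [pow_succ']
        exact Ideal.mul_mem_mul hy hr
      · intro a b ha hb
        rw [smul_add, ha, hb, add_zero]
    have h2 : IsFiniteLength B (M ⧸ M1) := by
      apply ih
      intro y hy q
      obtain ⟨q, rfl⟩ := Submodule.Quotient.mk_surjective _ q
      rw [← Submodule.Quotient.mk_smul, Submodule.Quotient.mk_eq_zero]
      exact Submodule.smul_mem_smul hy trivial
    rw [← Module.length_ne_top_iff] at *
    rw [Module.length_eq_add_of_exact M1.subtype M1.mkQ (Submodule.subtype_injective _)
      (Submodule.mkQ_surjective _) (LinearMap.exact_subtype_mkQ M1)]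
    exact WithTop.add_ne_top.2 ⟨h1, h2⟩

lemma chain_le (N : Submodule B Q) (w : ℕ → Q) (n : ℕ)
    (hN : ∀ i < n, w i ∈ N) (h : ∀ i < n, w i ∉ Submodule.span B (w '' Set.Iio i)) :
    (n : ℕ∞) ≤ Module.length B N := by
  rw [Module.length_submodule]
  have key : ∀ i ≤ n, (i : ℕ∞) ≤ Order.height (Submodule.span B (w '' Set.Iio i)) := by
    intro i
    induction i with
    | zero => simp
    | succ i ih =>
      intro hi
      have h1 := ih (by omega)
      have hlt : Submodule.span B (w '' Set.Iio i) < Submodule.span B (w '' Set.Iio (i+1)) := by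
        refine lt_of_le_of_ne (Submodule.span_mono (Set.image_mono (Set.Iio_subset_Iio (by omega)))) ?_
        intro he
        apply h i (by omega)
        rw [he]
        exact Submodule.subset_span ⟨i, by simp, rfl⟩
      have := Order.height_add_one_le hlt
      push_cast
      exact le_trans (by gcongr) this
  refine (key n le_rfl).trans (Order.height_mono ?_)
  rw [Submodule.span_le]
  rintro _ ⟨i, hi, rfl⟩
  exact hN i hi

variable (Q) in
def Phi (I : Ideal B) (x : B) (k : ℕ) : Submodule B Q where
  carrier := {q | x ^ k • q = 0 ∧ ∃ N : ℕ, ∀ y ∈ I ^ N, y • q = 0}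
  zero_mem' := by simp
  add_mem' := by
    rintro a b ⟨ha, N, hN⟩ ⟨hb, N', hN'⟩
    refine ⟨by rw [smul_add, ha, hb, add_zero], max N N', fun y hy => ?_⟩
    rw [smul_add, hN y (Ideal.pow_le_pow_right (le_max_left _ _) hy),
      hN' y (Ideal.pow_le_pow_right (le_max_right _ _) hy), add_zero]
  smul_mem' := by
    rintro c a ⟨ha, N, hN⟩
    exact ⟨by rw [smul_comm, ha, smul_zero], N, fun y hy => by rw [smul_comm, hN y hy, smul_zero]⟩

lemma mem_Phi {I : Ideal B} {x : B} {k : ℕ} {q : Q} :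
    q ∈ Phi Q I x k ↔ x ^ k • q = 0 ∧ ∃ N : ℕ, ∀ y ∈ I ^ N, y • q = 0 := Iff.rfl

lemma len_Phi (I : Ideal B) (x : B) (k : ℕ) :
    Module.length B (Phi Q I x k) ≤ k * Module.length B (Phi Q I x 1) := by
  induction k with
  | zero =>
    have : Phi Q I x 0 = ⊥ := by
      rw [eq_bot_iff]; rintro q ⟨h, -⟩; simpa using h
    rw [this]; simp
  | succ k ih =>
    let f : Phi Q I x (k+1) →ₗ[B] Phi Q I x 1 :=
      LinearMap.restrict (LinearMap.lsmul B Q (x ^ k)) (by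
        rintro q ⟨hq, N, hN⟩
        refine ⟨?_, N, fun y hy => ?_⟩
        · simpa [smul_smul, pow_succ'] using hq
        · simp only [LinearMap.lsmul_apply]; rw [smul_comm, hN y hy, smul_zero])
    have h1 := Module.length_eq_add_of_exact (LinearMap.ker f).subtype f.rangeRestrict
      (Submodule.subtype_injective _) f.surjective_rangeRestrict
      (by rw [LinearMap.exact_iff, LinearMap.ker_rangeRestrict]; simp)
    have h2 : Module.length B (LinearMap.ker f) ≤ Module.length B (Phi Q I x k) := by
      let g : LinearMap.ker f →ₗ[B] Phi Q I x k :=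
        LinearMap.codRestrict _ ((Phi Q I x (k+1)).subtype ∘ₗ (LinearMap.ker f).subtype) (by
          rintro ⟨⟨q, hq⟩, hk⟩
          refine ⟨?_, hq.2⟩
          have := congrArg Subtype.val (LinearMap.mem_ker.1 hk)
          simpa [f] using this)
      refine Module.length_le_of_injective g ?_
      intro a b hab
      have := congrArg Subtype.val hab
      exact Subtype.ext (Subtype.ext this)
    have h3 : Module.length B (LinearMap.range f) ≤ Module.length B (Phi Q I x 1) :=
      Module.length_le_of_injective _ (Submodule.subtype_injective _)
    rw [h1]; push_cast; rw [add_mul, one_mul]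
    exact add_le_add (h2.trans ih) h3

lemma phi_fin [IsLocalRing B] [IsNoetherianRing B] (x : B)
    (hfg : (Submodule.torsionBy B Q x).FG) :
    Module.length B (Phi Q (maximalIdeal B) x 1) ≠ ⊤ := by
  have hle : Phi Q (maximalIdeal B) x 1 ≤ Submodule.torsionBy B Q x := by
    rintro q ⟨h, -⟩; simpa using h
  have hfg' : (Phi Q (maximalIdeal B) x 1).FG := by
    haveI := isNoetherian_of_fg_of_noetherian _ hfg
    exact Submodule.FG.of_le hfg hle
  haveI : Module.Finite B (Phi Q (maximalIdeal B) x 1) := Module.Finite.iff_fg.2 hfg'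
  obtain ⟨s, hs⟩ := hfg'
  have hN : ∃ N, ∀ q ∈ s, ∀ y ∈ maximalIdeal B ^ N, y • q = 0 := by
    have : ∀ q ∈ s, ∃ N, ∀ y ∈ maximalIdeal B ^ N, y • q = 0 := fun q hq =>
      (mem_Phi.1 (hs ▸ Submodule.subset_span hq : q ∈ Phi Q (maximalIdeal B) x 1)).2
    choose! N hN using this
    refine ⟨s.sup N, fun q hq y hy => hN q hq y (Ideal.pow_le_pow_right (Finset.le_sup hq) hy)⟩
  obtain ⟨N, hN⟩ := hN
  rw [Module.length_ne_top_iff]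
  apply fl_pow N
  rintro y hy ⟨q, hq⟩
  ext
  simp only [SetLike.mk_smul_mk, ZeroMemClass.coe_zero]
  rw [← hs] at hq
  refine Submodule.span_induction ?_ ?_ ?_ ?_ hq
  · intro a ha; exact hN a ha y hy
  · simp
  · intro a b _ _ ha hb; rw [smul_add, ha, hb, add_zero]
  · intro c a _ ha; rw [smul_comm, ha, smul_zero]

/-- counting lemma -/
lemma count (I : Ideal B) (x : B) (h : ℕ)
    (hh : Module.length B (Phi Q I x 1) ≤ h) (r c : ℕ) (w : ℕ → ℕ → Q)
    (hw : ∀ i < r, ∀ j, c ≤ j → w i j ∈ Phi Q I x j)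
    (hind : ∀ i < r, ∀ j, c ≤ j → w i j ∉ Submodule.span B
      {q | ∃ i' < r, ∃ j', c ≤ j' ∧ (j' < j ∨ (j' = j ∧ i' < i)) ∧ q = w i' j'}) : r ≤ h := by
  by_contra hlt
  push Not at hlt
  have hr : 0 < r := by omega
  set k := (h + 1) * c + 1 with hk
  have hck : c ≤ k := by nlinarith
  have h1 : ((r * (k - c) : ℕ) : ℕ∞) ≤ Module.length B (Phi Q I x k) := by
    refine chain_le _ (fun n => w (n % r) (c + n / r)) _ ?_ ?_
    · intro n hn
      have h2 := hw (n % r) (Nat.mod_lt _ hr) (c + n / r) (Nat.le_add_right _ _)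
      have h3 : n / r < k - c := Nat.div_lt_of_lt_mul hn
      refine ⟨?_, h2.2⟩
      have : k = (k - (c + n / r)) + (c + n / r) := by omega
      rw [this, pow_add, mul_smul, h2.1, smul_zero]
    · intro n hn hmem
      refine hind (n % r) (Nat.mod_lt _ hr) (c + n / r) (Nat.le_add_right _ _) ?_
      refine Submodule.span_mono ?_ hmem
      rintro _ ⟨n', hn', rfl⟩
      refine ⟨n' % r, Nat.mod_lt _ hr, c + n' / r, Nat.le_add_right _ _, ?_, rfl⟩
      have hn'' : n' < n := hn'
      have hle : n' / r ≤ n / r := Nat.div_le_div_right hn''.le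
      rcases hle.lt_or_eq with h4 | h4
      · left; omega
      · right
        refine ⟨by omega, ?_⟩
        have e1 := Nat.div_add_mod n r
        have e2 := Nat.div_add_mod n' r
        rw [h4] at e2
        omega
  have h2 : ((r * (k - c) : ℕ) : ℕ∞) ≤ ((k * h : ℕ) : ℕ∞) := by
    refine h1.trans ((len_Phi I x k).trans ?_)
    push_cast
    gcongr
  have h3 : r * (k - c) ≤ k * h := by exact_mod_cast h2
  have h4 : (h + 1) * (k - c) ≤ r * (k - c) := Nat.mul_le_mul_right _ hlt
  obtain ⟨d, hd⟩ := Nat.exists_eq_add_of_le hck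
  have : k - c = d := by omega
  rw [this] at h3 h4
  nlinarith

/-- greedy selection -/
lemma greedy (N : Submodule B Q) (X : Set Q) (h : ℕ)
    (hX : ∀ (r : ℕ) (u : ℕ → Q), (∀ i < r, u i ∈ X) →
      (∀ i < r, u i ∉ N ⊔ Submodule.span B (u '' Set.Iio i)) → r ≤ h) :
    ∃ (r : ℕ) (u : ℕ → Q), (∀ i < r, u i ∈ X) ∧ X ⊆ (N ⊔ Submodule.span B (u '' Set.Iio r) : Submodule B Q) := by
  by_contra hcon
  push Not at hcon
  have : ∀ r : ℕ, ∃ u : ℕ → Q, (∀ i < r, u i ∈ X) ∧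
      (∀ i < r, u i ∉ N ⊔ Submodule.span B (u '' Set.Iio i)) := by
    intro r
    induction r with
    | zero => exact ⟨fun _ => 0, by simp, by simp⟩
    | succ r ih =>
      obtain ⟨u, hu, hu'⟩ := ih
      obtain ⟨y, hyX, hy⟩ := Set.not_subset.1 (hcon r u hu)
      refine ⟨Function.update u r y, ?_, ?_⟩
      · intro i hi
        by_cases hir : i = r
        · subst hir; simpa using hyX
        · rw [Function.update_of_ne hir]; exact hu i (by omega)
      · intro i hi
        have : Function.update u r y '' Set.Iio i = u '' Set.Iio i := by
          apply Set.image_congr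
          intro a ha
          rw [Function.update_of_ne]
          have : a < i := ha
          omega
        rw [this]
        by_cases hir : i = r
        · subst hir; simpa using hy
        · rw [Function.update_of_ne hir]; exact hu' i (by omega)
  obtain ⟨u, hu, hu'⟩ := this (h + 1)
  have := hX (h+1) u hu hu'
  omega

end lengths
end Pf

namespace Pf

universe u v
section loc

variable {B : Type u} [CommRing B] [IsDomain B] {K : Type v} [Field K] [Algebra B K] [IsFractionRing B K]

lemma tors_fg (C : Submodule B K) (hC : C.FG) (x : B) (hx : x ≠ 0) :
    (Submodule.torsionBy B (K ⧸ C) x).FG := by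
  have hx' : algebraMap B K x ≠ 0 := by simpa using hx
  have : Submodule.torsionBy B (K ⧸ C) x =
      (C.map (LinearMap.mulLeft B (algebraMap B K x)⁻¹)).map C.mkQ := by
    ext q
    obtain ⟨q, rfl⟩ := Submodule.Quotient.mk_surjective _ q
    rw [Submodule.mem_torsionBy_iff, ← Submodule.Quotient.mk_smul, Submodule.Quotient.mk_eq_zero]
    constructor
    · intro h
      refine ⟨q, ⟨x • q, h, ?_⟩, rfl⟩
      simp [Algebra.smul_def, hx']
    · rintro ⟨q', ⟨c, hc, rfl⟩, hq⟩
      have h1 : (algebraMap B K x)⁻¹ * c - q ∈ C := by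
        rw [← Submodule.Quotient.eq]; exact hq
      have h2 := C.smul_mem x h1
      rw [smul_sub, Algebra.smul_def, mul_inv_cancel_left₀ hx'] at h2
      have := C.sub_mem hc h2
      simpa using this
  rw [this]
  exact (hC.map _).map _

variable [IsLocalRing B] [IsNoetherianRing B]

lemma pow_ann {A : Subalgebra B K} {I : Ideal B} {z : K} (h : ∀ y ∈ I, y • z ∈ A) (i : ℕ) :
    ∀ y ∈ I ^ i, y • z ^ i ∈ A := by
  induction i with
  | zero => intro y _; simpa [Algebra.smul_def] using A.algebraMap_mem y
  | succ i ih =>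
    intro y hy
    rw [pow_succ] at hy
    refine Submodule.mul_induction_on hy ?_ ?_
    · intro a ha b hb
      have : (a * b) • z ^ (i+1) = (a • z ^ i) * (b • z) := by
        simp only [Algebra.smul_def, map_mul]; ring
      rw [this]
      exact A.mul_mem (ih a ha) (h b hb)
    · intro a b ha hb
      rw [add_smul]; exact A.add_mem ha hb

/-- relation with unit coefficient -/
lemma monic_rel (C : Subalgebra B K) (hC : (Subalgebra.toSubmodule C).FG) (x : B) (hx : x ≠ 0)
    (hxm : x ∈ maximalIdeal B) (z : K) (hz : ∀ y ∈ maximalIdeal B, y • z ∈ C) :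
    ∃ (k : ℕ) (p q : Polynomial C), p.degree < k ∧
      z ^ k = Polynomial.aeval z p + x • Polynomial.aeval z q := by
  classical
  let C' := Subalgebra.toSubmodule C
  have hfin := phi_fin (Q := K ⧸ C') x (tors_fg C' hC x hx)
  obtain ⟨h, hh⟩ := ENat.ne_top_iff_exists.1 hfin
  let M : ℕ → Submodule B K := fun j =>
    ((Polynomial.degreeLT C j).map (Polynomial.aeval (R := C) z).toLinearMap).restrictScalars B
  have hM : ∀ j w, w ∈ M j ↔ ∃ p : Polynomial C, p.degree < j ∧ Polynomial.aeval z p = w := by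
    intro j w
    simp [M, Polynomial.mem_degreeLT]
  set r := h + 2 with hr
  let D : Submodule B (K ⧸ C') := (M r).map C'.mkQ
  let X : (K ⧸ C') →ₗ[B] (K ⧸ C') := LinearMap.lsmul B (K ⧸ C') x
  have hDPhi : D ≤ Phi (K ⧸ C') (maximalIdeal B) x r := by
    have hgen : ∀ y ∈ maximalIdeal B ^ r, ∀ w ∈ M r, y • w ∈ C := by
      intro y hy w hw
      obtain ⟨p, hp, rfl⟩ := (hM _ _).1 hw
      rw [Polynomial.aeval_eq_sum_range, Finset.smul_sum]
      refine C.sum_mem ?_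
      intro i hi
      by_cases hp0 : p.coeff i = 0
      · rw [hp0]; simp
      have hir : i ≤ r := by
        have := (Polynomial.le_degree_of_ne_zero hp0).trans_lt hp
        have : i < r := by exact_mod_cast this
        omega
      rw [smul_comm, Algebra.smul_def]
      exact C.mul_mem (p.coeff i).2 (pow_ann hz i y (Ideal.pow_le_pow_right hir hy))
    rintro _ ⟨w, hw, rfl⟩
    refine ⟨?_, r, ?_⟩
    · rw [← map_smul, Submodule.mkQ_apply, Submodule.Quotient.mk_eq_zero]
      exact hgen _ (Ideal.pow_mem_pow hxm r) w hw
    · intro y hy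
      rw [← map_smul, Submodule.mkQ_apply, Submodule.Quotient.mk_eq_zero]
      exact hgen y hy w hw
  have hDlen : Module.length B D ≠ ⊤ := by
    have h1 : Module.length B D ≤ Module.length B (Phi (K ⧸ C') (maximalIdeal B) x r) :=
      Module.length_le_of_injective _ (Submodule.inclusion_injective hDPhi)
    have h2 := h1.trans (len_Phi (maximalIdeal B) x r)
    rw [← hh] at h2
    intro h3
    rw [h3] at h2
    have : ((r * h : ℕ) : ℕ∞) = ⊤ := by push_cast; exact top_le_iff.1 h2
    exact ENat.natCast_ne_top _ this
  -- length of D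
  have hlen : Module.length B D ≤ h + Module.length B (D.map X) := by
    let f : D →ₗ[B] D.map X := X.submoduleMap D
    have hex : Function.Exact (LinearMap.ker f).subtype f := LinearMap.exact_subtype_ker_map f
    have h1 : Module.length B D = Module.length B (LinearMap.ker f) +
        Module.length B (D.map X) := Module.length_eq_add_of_exact (LinearMap.ker f).subtype f
      (Submodule.subtype_injective _) (X.submoduleMap_surjective D) hex
    rw [h1]
    gcongr
    rw [hh]
    let g : LinearMap.ker f →ₗ[B] Phi (K ⧸ C') (maximalIdeal B) x 1 :=
      LinearMap.codRestrict _ (D.subtype ∘ₗ (LinearMap.ker f).subtype) (by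
        rintro ⟨⟨q, hq⟩, hk⟩
        refine ⟨?_, (hDPhi hq).2⟩
        have := congrArg Subtype.val (LinearMap.mem_ker.1 hk)
        simpa [f, X] using this)
    refine Module.length_le_of_injective g ?_
    intro a b hab
    have := congrArg Subtype.val hab
    exact Subtype.ext (Subtype.ext this)
  by_contra hcon
  push Not at hcon
  let E : ℕ → Submodule B (K ⧸ C') := fun k => (M k).map C'.mkQ ⊔ D.map X
  have hMmono : Monotone M := by
    intro a b hab w hw
    obtain ⟨p, hp, rfl⟩ := (hM _ _).1 hw
    exact (hM _ _).2 ⟨p, hp.trans_le (by exact_mod_cast hab), rfl⟩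
  have hE : ∀ k, 1 ≤ k → k < r → E k < E (k + 1) := by
    intro k hk hkr
    refine lt_of_le_of_ne (sup_le_sup_right (Submodule.map_mono (hMmono (by omega))) _) ?_
    intro he
    have hzk : C'.mkQ (z ^ k) ∈ E k := by
      rw [he]
      refine Submodule.mem_sup_left ⟨z ^ k, (hM _ _).2 ⟨Polynomial.X ^ k, ?_, by simp⟩, rfl⟩
      rw [Polynomial.degree_X_pow]; exact_mod_cast Nat.lt_succ_self k
    obtain ⟨_, ⟨w, hw, rfl⟩, _, ⟨_, ⟨w', hw', rfl⟩, rfl⟩, hsum⟩ := Submodule.mem_sup.1 hzk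
    obtain ⟨p, hp, rfl⟩ := (hM _ _).1 hw
    obtain ⟨q, hq, rfl⟩ := (hM _ _).1 hw'
    have h1 : z ^ k - (Polynomial.aeval z p + x • Polynomial.aeval z q) ∈ C' := by
      rw [← Submodule.Quotient.mk_eq_zero C']
      have : X (C'.mkQ ((Polynomial.aeval z) q)) = C'.mkQ (x • Polynomial.aeval z q) := by
        simp [X]
      rw [this, ← map_add] at hsum
      rw [Submodule.Quotient.mk_sub, sub_eq_zero]
      exact hsum.symm
    refine hcon k (p + Polynomial.C ⟨_, h1⟩) q ?_ ?_
    · refine (Polynomial.degree_add_le _ _).trans_lt (max_lt hp ?_)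
      refine Polynomial.degree_C_le.trans_lt ?_
      exact_mod_cast hk
    · simp only [map_add, Polynomial.aeval_C]
      change _ = _ + (z ^ k - _) + _
      ring
  have hEh : ∀ k, 1 ≤ k → k ≤ r →
      ((k - 1 : ℕ) : ℕ∞) + Order.height (D.map X) ≤ Order.height (E k) := by
    intro k hk
    induction k, hk using Nat.le_induction with
    | base => intro _; simpa using Order.height_mono (le_sup_right)
    | succ k hk ih =>
      intro hkr
      have h1 := Order.height_add_one_le (hE k hk (by omega))
      have h2 := ih (by omega)
      refine le_trans ?_ h1
      have : ((k + 1 - 1 : ℕ) : ℕ∞) = ((k - 1 : ℕ) : ℕ∞) + 1 := by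
        norm_cast; omega
      rw [this, add_right_comm]
      gcongr
  have h1 := hEh r (by omega) le_rfl
  have h2 : E r ≤ D := by
    refine sup_le le_rfl ?_
    rintro _ ⟨_, hd, rfl⟩
    exact D.smul_mem x hd
  have h3 := h1.trans (Order.height_mono h2)
  rw [← Module.length_submodule, ← Module.length_submodule] at h3
  have h4 := h3.trans hlen
  have h5 : Module.length B (D.map X) ≠ ⊤ := by
    intro h
    rw [h, add_top, top_le_iff] at h3
    exact hDlen h3
  obtain ⟨n, hn⟩ := ENat.ne_top_iff_exists.1 h5
  rw [← hn] at h4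
  have h6 : (r - 1) + n ≤ h + n := by exact_mod_cast h4
  omega

/-- common denominators -/
lemma common_denom (r e : ℕ) (x : B) (ω w : ℕ → K)
    (h1 : ∀ i < r, IsIntegral B (x • ω i)) (h2 : ∀ i < r, ∀ y ∈ maximalIdeal B ^ e, IsIntegral B (y • ω i))
    (h3 : ∀ i < r, IsIntegral B (w i)) :
    ∃ a : B, a ≠ 0 ∧ ∀ i < r, ∀ j, Submodule.Quotient.mk (p := (1 : Submodule B K))
      (a • (w i * ω i ^ j)) ∈ Phi (K ⧸ (1 : Submodule B K)) (maximalIdeal B) x j := by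
  classical
  obtain ⟨s, hs⟩ : (maximalIdeal B ^ e).FG := IsNoetherian.noetherian _
  let F : Set K := ((fun i => x • ω i) '' Set.Iio r) ∪ (w '' Set.Iio r) ∪
    ((fun p : ℕ × B => p.2 • ω p.1) '' (Set.Iio r ×ˢ (s : Set B)))
  have hF : F.Finite := (((Set.finite_Iio r).image _).union ((Set.finite_Iio r).image _)).union
    (((Set.finite_Iio r).prod s.finite_toSet).image _)
  let C := Algebra.adjoin B F
  have hC : (Subalgebra.toSubmodule C).FG := by
    refine fg_adjoin_of_finite hF ?_
    rintro _ ((⟨i, hi, rfl⟩ | ⟨i, hi, rfl⟩) | ⟨⟨i, y⟩, ⟨hi, hy⟩, rfl⟩)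
    · exact h1 i hi
    · exact h3 i hi
    · exact h2 i hi y (hs ▸ Submodule.subset_span hy)
  obtain ⟨g, hg⟩ := hC
  obtain ⟨⟨a, ha0⟩, ha⟩ := IsLocalization.exist_integer_multiples_of_finset (nonZeroDivisors B) g
  have haC : ∀ c ∈ C, a • c ∈ (1 : Submodule B K) := by
    intro c hc
    have hc' : c ∈ Submodule.span B (g : Set K) := by rw [hg]; exact hc
    refine Submodule.span_induction ?_ ?_ ?_ ?_ hc'
    · intro q hq
      obtain ⟨b, hb⟩ := ha q hq
      rw [Submodule.mem_one]
      exact ⟨b, hb⟩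
    · simp
    · intro p q _ _ hp hq; rw [smul_add]; exact Submodule.add_mem _ hp hq
    · intro c q _ hq; rw [smul_comm]; exact Submodule.smul_mem _ _ hq
  refine ⟨a, nonZeroDivisors.ne_zero ha0, fun i hi j => ?_⟩
  have hw : w i ∈ C := Algebra.subset_adjoin (Or.inl (Or.inr ⟨i, hi, rfl⟩))
  have hx : x • ω i ∈ C := Algebra.subset_adjoin (Or.inl (Or.inl ⟨i, hi, rfl⟩))
  have hm : ∀ y ∈ maximalIdeal B ^ e, y • ω i ∈ C := by
    intro y hy
    rw [← hs] at hy
    refine Submodule.span_induction ?_ ?_ ?_ ?_ hy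
    · intro q hq; exact Algebra.subset_adjoin (Or.inr ⟨(i, q), ⟨hi, hq⟩, rfl⟩)
    · simp
    · intro p q _ _ hp hq; rw [add_smul]; exact C.add_mem hp hq
    · intro c q _ hq; rw [smul_assoc]; exact C.smul_mem hq _
  refine ⟨?_, e * j, ?_⟩
  · rw [← Submodule.Quotient.mk_smul, Submodule.Quotient.mk_eq_zero, smul_comm]
    apply haC
    have : x ^ j • (w i * ω i ^ j) = w i * (x • ω i) ^ j := by
      simp only [Algebra.smul_def, map_pow, mul_pow]; ring
    rw [this]
    exact C.mul_mem hw (C.pow_mem hx j)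
  · intro y hy
    rw [← Submodule.Quotient.mk_smul, Submodule.Quotient.mk_eq_zero, smul_comm]
    apply haC
    rw [pow_mul] at hy
    rw [← mul_smul_comm]
    exact C.mul_mem hw (pow_ann hm j y hy)

/-- main bound -/
lemma bound (x : B) (hx : x ≠ 0) (h : ℕ)
    (hh : Module.length B (Phi (K ⧸ (1 : Submodule B K)) (maximalIdeal B) x 1) ≤ h)
    (r e : ℕ) (ω w : ℕ → K) (V : ℕ → Subalgebra B K)
    (h1 : ∀ i < r, IsIntegral B (x • ω i))
    (h2 : ∀ i < r, ∀ y ∈ maximalIdeal B ^ e, IsIntegral B (y • ω i))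
    (h3 : ∀ i < r, IsIntegral B (w i))
    (hwV : ∀ i < r, ∀ i' < r, w i' ∈ V i)
    (hω0 : ∀ i < r, ω i ≠ 0)
    (hωV : ∀ i < r, (x • ω i)⁻¹ ∈ V i)
    (harch : ∀ i < r, ∀ a : B, a ≠ 0 → ∃ c : ℕ, algebraMap B K x ^ c / algebraMap B K a ∈ V i)
    (hωω : ∀ i < r, ∀ i' < r, ω i' ∈ V i ∨ ω i' = ω i)
    (hind : ∀ i < r, w i ∉ Submodule.span B {q | ∃ i' < i, ω i' ∉ V i ∧ q = w i'} ⊔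
      (Subalgebra.toSubmodule (V i)).map (LinearMap.mulLeft B (algebraMap B K x))) : r ≤ h := by
  have hx' : algebraMap B K x ≠ 0 := by simpa using hx
  obtain ⟨a, ha, hPhi⟩ := common_denom r e x ω w h1 h2 h3
  have ha' : algebraMap B K a ≠ 0 := by simpa using ha
  have hc : ∃ c, ∀ i < r, algebraMap B K x ^ c / algebraMap B K a ∈ V i := by
    have := fun i hi => harch i hi a ha
    choose! c hc using this
    refine ⟨(Finset.range r).sup c, fun i hi => ?_⟩
    have hle : c i ≤ (Finset.range r).sup c := Finset.le_sup (Finset.mem_range.2 hi)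
    obtain ⟨d, hd⟩ := Nat.exists_eq_add_of_le hle
    rw [hd, pow_add, mul_comm, mul_div_assoc]
    exact (V i).mul_mem ((V i).pow_mem ((V i).algebraMap_mem x) _) (hc i hi)
  obtain ⟨c, hc⟩ := hc
  refine count (maximalIdeal B) x h hh r (c + 1)
    (fun i j => Submodule.Quotient.mk (a • (w i * ω i ^ j))) (fun i hi j _ => hPhi i hi j) ?_
  intro i hi j hj hmem
  let T : Submodule B K := Submodule.span B {q | ∃ i' < i, ω i' ∉ V i ∧ q = w i'} ⊔
      (Subalgebra.toSubmodule (V i)).map (LinearMap.mulLeft B (algebraMap B K x))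
  let N : Submodule B K := T.comap (LinearMap.mulLeft B (algebraMap B K a * ω i ^ j)⁻¹)
  have hT : ∀ v ∈ V i, algebraMap B K x * v ∈ T := fun v hv => Submodule.mem_sup_right ⟨v, hv, rfl⟩
  have hω := hω0 i hi
  have hVN : ∀ v ∈ V i, v ∈ N := by
    intro v hv
    change (algebraMap B K a * ω i ^ j)⁻¹ * v ∈ T
    have : (algebraMap B K a * ω i ^ j)⁻¹ * v = algebraMap B K x *
        ((algebraMap B K x ^ (j - 1 - c)) * (algebraMap B K x ^ c / algebraMap B K a) *
          ((x • ω i)⁻¹) ^ j * v) := by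
      obtain ⟨d, rfl⟩ := Nat.exists_eq_add_of_le hj
      have : c + 1 + d - 1 - c = d := by omega
      rw [this, Algebra.smul_def, inv_pow, mul_pow]
      field_simp
      try ring
    rw [this]
    apply hT
    exact (V i).mul_mem ((V i).mul_mem ((V i).mul_mem ((V i).pow_mem ((V i).algebraMap_mem x) _)
      (hc i hi)) ((V i).pow_mem (hωV i hi) _)) hv
  have h1N : (1 : Submodule B K) ≤ N := by
    intro q hq
    obtain ⟨b, rfl⟩ := Submodule.mem_one.1 hq
    exact hVN _ ((V i).algebraMap_mem b)
  have hspan : Submodule.span B {q : K ⧸ (1 : Submodule B K) | ∃ i' < r, ∃ j', c + 1 ≤ j' ∧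
      (j' < j ∨ (j' = j ∧ i' < i)) ∧ q = Submodule.Quotient.mk (a • (w i' * ω i' ^ j'))} ≤
      N.map (Submodule.mkQ 1) := by
    rw [Submodule.span_le]
    rintro _ ⟨i', hi', j', hj', hjj, rfl⟩
    refine ⟨_, ?_, rfl⟩
    by_cases hV : ω i' ∈ V i
    · exact hVN _ ((V i).smul_mem ((V i).mul_mem (hwV i hi i' hi') ((V i).pow_mem hV _)) a)
    · have he := (hωω i hi i' hi').resolve_left hV
      change (algebraMap B K a * ω i ^ j)⁻¹ * (a • (w i' * ω i' ^ j')) ∈ T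
      rcases hjj with hlt | ⟨rfl, hlt⟩
      · have : (algebraMap B K a * ω i ^ j)⁻¹ * (a • (w i' * ω i' ^ j')) = algebraMap B K x *
            ((algebraMap B K x ^ (j - j' - 1)) * ((x • ω i)⁻¹) ^ (j - j') * w i') := by
          rw [he]
          obtain ⟨d, rfl⟩ := Nat.exists_eq_add_of_lt hlt
          have e1 : j' + d + 1 - j' = d + 1 := by omega
          rw [e1, Nat.add_sub_cancel, Algebra.smul_def, Algebra.smul_def, inv_pow, mul_pow]
          field_simp
          try ring
        rw [this]
        apply hT
        exact (V i).mul_mem ((V i).mul_mem ((V i).pow_mem ((V i).algebraMap_mem x) _)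
          ((V i).pow_mem (hωV i hi) _)) (hwV i hi i' hi')
      · have : (algebraMap B K a * ω i ^ j')⁻¹ * (a • (w i' * ω i' ^ j')) = w i' := by
          rw [he, Algebra.smul_def]; field_simp
        rw [this]
        exact Submodule.mem_sup_left (Submodule.subset_span ⟨i', hlt, hV, rfl⟩)
  obtain ⟨n, hn, hne⟩ := hspan hmem
  have hmem' : a • (w i * ω i ^ j) ∈ N := by
    have h5 : n - a • (w i * ω i ^ j) ∈ (1 : Submodule B K) := by
      rw [← Submodule.Quotient.eq]; exact hne
    have := N.sub_mem hn (h1N h5)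
    simpa using this
  apply hind i hi
  have h6 : (algebraMap B K a * ω i ^ j)⁻¹ * (a • (w i * ω i ^ j)) ∈ T := hmem'
  have : (algebraMap B K a * ω i ^ j)⁻¹ * (a • (w i * ω i ^ j)) = w i := by
    rw [Algebra.smul_def]; field_simp
  rwa [this] at h6

end loc
end Pf

namespace Pf

universe u v
section glob

section gen
variable {A : Type u} [CommRing A] [IsDomain A] (K : Type v) [Field K] [Algebra A K] [IsFractionRing A K]

/-- localization as a subalgebra of the fraction field -/
def Lo (q : Ideal A) [q.IsPrime] : Subalgebra A K :=
  Localization.subalgebra.ofField K q.primeCompl q.primeCompl_le_nonZeroDivisors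

instance (q : Ideal A) [q.IsPrime] : IsLocalization q.primeCompl (Lo K q) :=
  Localization.subalgebra.isLocalization_ofField K _ _

instance (q : Ideal A) [q.IsPrime] : IsLocalization.AtPrime (Lo K q) q :=
  Localization.subalgebra.isLocalization_ofField K _ _

instance (q : Ideal A) [q.IsPrime] : IsLocalRing (Lo K q) := IsLocalization.AtPrime.isLocalRing _ q

instance (q : Ideal A) [q.IsPrime] [IsNoetherianRing A] : IsNoetherianRing (Lo K q) :=
  IsLocalization.isNoetherianRing q.primeCompl _ inferInstance

variable {K}

lemma am_ne {s : A} (hs : s ≠ 0) : algebraMap A K s ≠ 0 := by simpa using hs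

lemma ne_of_notin {q : Ideal A} {s : A} (hs : s ∉ q) : s ≠ 0 := by
  rintro rfl; exact hs q.zero_mem

lemma mem_Lo {q : Ideal A} [q.IsPrime] {z : K} :
    z ∈ Lo K q ↔ ∃ s, s ∉ q ∧ ∃ a, algebraMap A K s * z = algebraMap A K a := by
  constructor
  · rintro ⟨a, s, hs, rfl⟩
    have := am_ne (K := K) (ne_of_notin hs)
    exact ⟨s, hs, a, by field_simp⟩
  · rintro ⟨s, hs, a, h⟩
    have := am_ne (K := K) (ne_of_notin hs)
    exact ⟨a, s, hs, by rw [← h]; field_simp⟩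

lemma inv_mem_Lo {q : Ideal A} [q.IsPrime] {s : A} (hs : s ∉ q) : (algebraMap A K s)⁻¹ ∈ Lo K q :=
  mem_Lo.2 ⟨s, hs, 1, by simp [am_ne (ne_of_notin hs)]⟩

lemma notin_Lo {q : Ideal A} [q.IsPrime] {s : A} (hs : s ∈ q) (h0 : s ≠ 0) :
    (algebraMap A K s)⁻¹ ∉ Lo K q := by
  intro h
  obtain ⟨t, ht, a, h⟩ := mem_Lo.1 h
  have := am_ne (K := K) h0
  have h2 : t = a * s := by
    apply IsFractionRing.injective A K
    rw [map_mul, ← h]; field_simp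
  exact ht (h2 ▸ q.mul_mem_left _ hs)

/-- height one primes -/
structure H1 (q : Ideal A) : Prop where
  prime : q.IsPrime
  ne : q ≠ ⊥
  mn : ∀ q0 : Ideal A, q0.IsPrime → q0 ≤ q → q0 = ⊥ ∨ q0 = q

lemma arch {q : Ideal A} (hq : H1 q) [q.IsPrime] {a y : A} (ha : a ≠ 0) (hy : y ∈ q) :
    ∃ N : ℕ, algebraMap A K y ^ N / algebraMap A K a ∈ Lo K q := by
  have key : ∃ N : ℕ, ∃ s, s ∉ q ∧ ∃ c, s * y ^ N = c * a := by
    by_contra hcon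
    push Not at hcon
    obtain ⟨p, hp, hap, hdis⟩ := Ideal.exists_le_prime_disjoint (Ideal.span {a})
      (q.primeCompl ⊔ Submonoid.powers y) (by
        rw [Set.disjoint_left]
        intro z hz hz2
        obtain ⟨c, rfl⟩ := Ideal.mem_span_singleton'.1 hz
        obtain ⟨s, hs, t, ⟨N, rfl⟩, he⟩ := Submonoid.mem_sup.1 hz2
        exact hcon N s hs c he)
    rw [Set.disjoint_left] at hdis
    have hpq : p ≤ q := by
      intro z hz
      by_contra hzq
      exact hdis hz (Submonoid.mem_sup_left (show z ∈ q.primeCompl from hzq))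
    rcases hq.mn p hp hpq with h | h
    · rw [h] at hap
      exact ha (by simpa using hap)
    · exact hdis (h ▸ hy : y ∈ p) (Submonoid.mem_sup_right (Submonoid.mem_powers y))
  obtain ⟨N, s, hs, c, h⟩ := key
  refine ⟨N, mem_Lo.2 ⟨s, hs, c, ?_⟩⟩
  have := am_ne (K := K) ha
  rw [← map_pow, mul_div_assoc', ← map_mul, h, map_mul]
  field_simp

/-- two distinct height one primes: element in one not in the other -/
lemma H1.exists_notin {q q' : Ideal A} (hq : H1 q) (hq' : H1 q') (h : q' ≠ q) : ∃ ρ ∈ q', ρ ∉ q := by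
  by_contra hcon
  push Not at hcon
  rcases hq.mn q' hq'.prime hcon with h1 | h1
  · exact hq'.ne h1
  · exact h h1

lemma sep_fin {q : Ideal A} (hq : H1 q) [q.IsPrime] {x : A} (hx : x ≠ 0) (F : Set (Ideal A)) (hF : F.Finite)
    (hF1 : ∀ q' ∈ F, H1 q' ∧ q' ≠ q) :
    ∃ σ, σ ∉ q ∧ ∀ q' ∈ F, ∀ [q'.IsPrime], algebraMap A K σ / algebraMap A K x ∈ Lo K q' := by
  induction F, hF using Set.Finite.induction_on with
  | empty => exact ⟨1, fun h => hq.prime.ne_top ((Ideal.eq_top_iff_one _).2 h), by simp⟩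
  | @insert p F _ _ ih =>
    obtain ⟨σ, hσ, hσF⟩ := ih (fun q' h => hF1 q' (Set.mem_insert_of_mem _ h))
    obtain ⟨hp1, hpq⟩ := hF1 p (Set.mem_insert _ _)
    obtain ⟨ρ, hρp, hρq⟩ := hq.exists_notin hp1 hpq
    have := hp1.prime
    obtain ⟨N, hN⟩ := arch (K := K) hp1 hx hρp
    refine ⟨ρ ^ N * σ, fun h => ?_, ?_⟩
    · rcases hq.prime.mem_or_mem h with h | h
      · exact hρq (hq.prime.mem_of_pow_mem _ h)
      · exact hσ h
    · intro q' hq' _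
      rcases Set.mem_insert_iff.1 hq' with rfl | h
      · rw [map_mul, map_pow, mul_div_right_comm]
        exact Subalgebra.mul_mem _ hN (Subalgebra.algebraMap_mem _ _)
      · rw [map_mul, mul_div_assoc]
        exact Subalgebra.mul_mem _ (Subalgebra.algebraMap_mem _ _) (hσF q' h)

end gen

variable {B : Type u} [CommRing B] [IsDomain B] [IsNoetherianRing B] {K : Type v} [Field K] [Algebra B K]
  [IsFractionRing B K]

variable (B K) in
abbrev IC := integralClosure B K

lemma exp_unif {q : Ideal (IC B K)} (hq : H1 q) [q.IsPrime] {x : IC B K} (hx : x ≠ 0) :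
    ∃ σ, σ ∉ q ∧ ∃ e : ℕ, ∀ y ∈ (q.comap (algebraMap B (IC B K))) ^ e, ∃ s, algebraMap B (IC B K) y * σ = x * s := by
  let J : Ideal (IC B K) :=
  { carrier := {b | ∃ ρ, ρ ∉ q ∧ ∃ s, b * ρ = x * s}
    zero_mem' := ⟨1, fun h => hq.prime.ne_top ((Ideal.eq_top_iff_one _).2 h), 0, by simp⟩
    add_mem' := by
      rintro a b ⟨ρ, hρ, s, h⟩ ⟨ρ', hρ', s', h'⟩
      refine ⟨ρ * ρ', fun hh => (hq.prime.mem_or_mem hh).elim hρ hρ', s * ρ' + s' * ρ, ?_⟩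
      linear_combination ρ' * h + ρ * h'
    smul_mem' := by
      rintro c b ⟨ρ, hρ, s, h⟩
      refine ⟨ρ, hρ, c * s, ?_⟩
      simp only [smul_eq_mul]
      linear_combination c * h }
  have hrad : q ≤ J.radical := by
    intro y hy
    obtain ⟨N, hN⟩ := arch (K := K) hq hx hy
    obtain ⟨s, hs, a, h⟩ := mem_Lo.1 hN
    refine ⟨N, s, hs, a, ?_⟩
    apply IsFractionRing.injective (IC B K) K
    have := am_ne (K := K) hx
    rw [map_mul, map_mul, ← h, map_pow]; field_simp
  have hrad' : q.comap (algebraMap B (IC B K)) ≤ (J.comap (algebraMap B (IC B K))).radical := by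
    rw [← Ideal.comap_radical]; exact Ideal.comap_mono hrad
  obtain ⟨e, he⟩ := Ideal.exists_pow_le_of_le_radical_of_fg hrad' (IsNoetherian.noetherian _)
  have key : ∀ T : Set B, T.Finite → Ideal.span T ≤ J.comap (algebraMap B (IC B K)) →
      ∃ σ, σ ∉ q ∧ ∀ y ∈ Ideal.span T, ∃ s, algebraMap B (IC B K) y * σ = x * s := by
    intro T hT
    induction T, hT using Set.Finite.induction_on with
    | empty =>
      intro _
      refine ⟨1, fun h => hq.prime.ne_top ((Ideal.eq_top_iff_one _).2 h), fun y hy => ⟨0, ?_⟩⟩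
      simp at hy; simp [hy]
    | @insert b T _ _ ih =>
      intro hle
      obtain ⟨σ, hσ, h⟩ := ih ((Ideal.span_mono (Set.subset_insert _ _)).trans hle)
      obtain ⟨ρ, hρ, s, hs⟩ := hle (Ideal.subset_span (Set.mem_insert b T))
      refine ⟨σ * ρ, fun hh => (hq.prime.mem_or_mem hh).elim hσ hρ, fun y hy => ?_⟩
      obtain ⟨c, z, hz, rfl⟩ := Submodule.mem_span_insert.1 hy
      obtain ⟨s', hs'⟩ := h z hz
      refine ⟨algebraMap B _ c * s * σ + s' * ρ, ?_⟩
      rw [smul_eq_mul, map_add, map_mul]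
      linear_combination algebraMap B _ c * σ * hs + ρ * hs'
  obtain ⟨T, hT⟩ := IsNoetherian.noetherian ((q.comap (algebraMap B (IC B K))) ^ e)
  obtain ⟨σ, hσ, h⟩ := key T T.finite_toSet (by rw [Ideal.span, hT]; exact he)
  refine ⟨σ, hσ, e, fun y hy => h y ?_⟩
  rw [Ideal.span, hT]; exact hy

/-- the element omega numerator -/
lemma omega {q : Ideal (IC B K)} (hq : H1 q) [q.IsPrime] {x : IC B K} (hx : x ≠ 0)
    (F : Set (Ideal (IC B K))) (hF : F.Finite) (hF1 : ∀ q' ∈ F, H1 q' ∧ q' ≠ q) :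
    ∃ σ, σ ∉ q ∧ (∃ e : ℕ, ∀ y ∈ (q.comap (algebraMap B (IC B K))) ^ e, ∃ s, algebraMap B (IC B K) y * σ = x * s) ∧
     ∀ q' ∈ F, ∀ [q'.IsPrime], algebraMap (IC B K) K σ / algebraMap (IC B K) K x ∈ Lo K q' := by
  obtain ⟨σ, hσ, e, he⟩ := exp_unif hq hx
  obtain ⟨τ, hτ, h⟩ := sep_fin (K := K) hq hx F hF hF1
  refine ⟨σ * τ, fun hh => (hq.prime.mem_or_mem hh).elim hσ hτ, ⟨e, fun y hy => ?_⟩, fun q' hq' _ => ?_⟩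
  · obtain ⟨s, hs⟩ := he y hy
    exact ⟨s * τ, by linear_combination τ * hs⟩
  · rw [map_mul, mul_div_assoc]
    exact Subalgebra.mul_mem _ (Subalgebra.algebraMap_mem _ _) (h q' hq')

end glob
end Pf

namespace Pf

universe u v
section glob2

variable {B : Type u} [CommRing B] [IsDomain B] [IsNoetherianRing B] {K : Type v} [Field K] [Algebra B K]
  [IsFractionRing B K]

lemma Lo_le {P : Ideal B} [P.IsPrime] {q : Ideal (IC B K)} [q.IsPrime]
    (h : q.comap (algebraMap B (IC B K)) = P) {z : K} (hz : z ∈ Lo K P) : z ∈ Lo K q := by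
  obtain ⟨s, hs, a, ha⟩ := mem_Lo.1 hz
  refine mem_Lo.2 ⟨algebraMap B _ s, fun h' => hs (h ▸ h'), algebraMap B _ a, ?_⟩
  rw [← IsScalarTower.algebraMap_apply, ← IsScalarTower.algebraMap_apply]; exact ha

/-- `Lo K q` as an algebra over the localized base -/
def VB {P : Ideal B} [P.IsPrime] (q : Ideal (IC B K)) [q.IsPrime]
    (h : q.comap (algebraMap B (IC B K)) = P) : Subalgebra (Lo K P) K where
  carrier := Lo K q
  mul_mem' := (Lo K q).mul_mem
  add_mem' := (Lo K q).add_mem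
  algebraMap_mem' := fun b => Lo_le h b.2

lemma mem_VB {P : Ideal B} [P.IsPrime] {q : Ideal (IC B K)} [q.IsPrime]
    {h : q.comap (algebraMap B (IC B K)) = P} {z : K} : z ∈ VB q h ↔ z ∈ Lo K q := Iff.rfl

lemma int_mem {P : Ideal B} [P.IsPrime] {q : Ideal (IC B K)} [q.IsPrime]
    (h : q.comap (algebraMap B (IC B K)) = P) {z : K} (hz : IsIntegral (Lo K P) z) : z ∈ Lo K q := by
  obtain ⟨⟨s, hs⟩, hm⟩ := IsIntegral.exists_multiple_integral_of_isLocalization P.primeCompl z hz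
  refine mem_Lo.2 ⟨algebraMap B _ s, fun h' => hs (h ▸ h'), ⟨_, hm⟩, ?_⟩
  rw [← IsScalarTower.algebraMap_apply]
  exact (Algebra.smul_def s z).symm

lemma mem_max_pow {P : Ideal B} [P.IsPrime] {e : ℕ} {y : Lo K P} (hy : y ∈ maximalIdeal (Lo K P) ^ e) :
    ∃ s, s ∉ P ∧ ∃ b ∈ P ^ e, algebraMap B (Lo K P) s * y = algebraMap B (Lo K P) b := by
  rw [← IsLocalization.AtPrime.map_eq_maximalIdeal P (Lo K P), ← Ideal.map_pow,
    IsLocalization.mem_map_algebraMap_iff P.primeCompl] at hy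
  obtain ⟨⟨⟨b, hb⟩, ⟨s, hs⟩⟩, h⟩ := hy
  exact ⟨s, hs, b, hb, by rw [mul_comm]; exact h⟩

lemma am_mem_max {P : Ideal B} [P.IsPrime] {x : B} (hx : x ∈ P) :
    algebraMap B (Lo K P) x ∈ maximalIdeal (Lo K P) := by
  rw [← IsLocalization.AtPrime.map_eq_maximalIdeal P (Lo K P)]
  exact Ideal.mem_map_of_mem _ hx

variable (K) in
/-- the length bound -/
abbrev PL (P : Ideal B) [P.IsPrime] (x : B) : ℕ∞ :=
  Module.length (Lo K P) (Phi (K ⧸ (1 : Submodule (Lo K P) K)) (maximalIdeal (Lo K P))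
    (algebraMap B (Lo K P) x) 1)

lemma am_ne' {P : Ideal B} [P.IsPrime] {x : B} (hx : x ≠ 0) : algebraMap B (Lo K P) x ≠ 0 := by
  intro h
  have : algebraMap B K x = 0 := by
    rw [IsScalarTower.algebraMap_apply B (Lo K P) K, h, map_zero]
  exact am_ne hx this

lemma PL_fin {P : Ideal B} [P.IsPrime] {x : B} (hx : x ≠ 0) : ∃ h : ℕ, PL K P x ≤ h := by
  have : PL K P x ≠ ⊤ := by
    apply phi_fin
    apply tors_fg
    · exact ⟨{1}, by simp [Submodule.one_eq_span]⟩
    · exact am_ne' hx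
  obtain ⟨h, hh⟩ := ENat.ne_top_iff_exists.1 this
  exact ⟨h, hh.symm.le⟩

lemma bound_glob {P : Ideal B} [P.IsPrime] {x : B} (hx : x ≠ 0) (hxP : x ∈ P) (h : ℕ)
    (hh : PL K P x ≤ h) (r : ℕ) (q : ℕ → Ideal (IC B K)) [∀ i, (q i).IsPrime] (hq : ∀ i, H1 (q i))
    (hP : ∀ i, (q i).comap (algebraMap B (IC B K)) = P) (w σ : ℕ → IC B K)
    (hσ : ∀ i < r, σ i ∉ q i)
    (he : ∀ i < r, ∃ e : ℕ, ∀ y ∈ P ^ e, ∃ s, algebraMap B (IC B K) y * σ i = algebraMap B _ x * s)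
    (hωω : ∀ i < r, ∀ i' < r, (σ i' : K) / algebraMap B K x ∈ Lo K (q i) ∨ σ i' = σ i)
    (hind : ∀ i < r, (w i : K) ∉ Submodule.span (Lo K P)
      {z : K | ∃ i' < i, (σ i' : K) / algebraMap B K x ∉ Lo K (q i) ∧ z = w i'} ⊔
      (Subalgebra.toSubmodule (VB (q i) (hP i))).map (LinearMap.mulLeft (Lo K P) (algebraMap B K x))) :
    r ≤ h := by
  have hxK := am_ne (K := K) hx
  have hE : ∃ e, ∀ i < r, ∀ y ∈ P ^ e, ∃ s, algebraMap B (IC B K) y * σ i = algebraMap B _ x * s := by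
    choose! e he using he
    refine ⟨(Finset.range r).sup e, fun i hi y hy => he i hi y ?_⟩
    exact Ideal.pow_le_pow_right (Finset.le_sup (Finset.mem_range.2 hi)) hy
  obtain ⟨e, he⟩ := hE
  have hxx : algebraMap (Lo K P) K (algebraMap B (Lo K P) x) = algebraMap B K x :=
    (IsScalarTower.algebraMap_apply _ _ _ _).symm
  have hxω : ∀ i, algebraMap B (Lo K P) x • ((σ i : K) / algebraMap B K x) = σ i := by
    intro i
    rw [Algebra.smul_def, hxx]; field_simp
  have hint : ∀ s : IC B K, IsIntegral (Lo K P) (s : K) := fun s => s.2.tower_top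
  refine bound (algebraMap B (Lo K P) x) (am_ne' hx) h hh r e (fun i => (σ i : K) / algebraMap B K x)
    (fun i => w i) (fun i => VB (q i) (hP i)) ?_ ?_ ?_ ?_ ?_ ?_ ?_ ?_ ?_
  · intro i hi
    rw [hxω]; exact hint _
  · intro i hi y hy
    obtain ⟨s, hs, b, hb, hy⟩ := mem_max_pow hy
    obtain ⟨c, hc⟩ := he i hi b hb
    have hc' : algebraMap B K b * (σ i : K) = algebraMap B K x * c := by
      have := congrArg (algebraMap (IC B K) K) hc
      simpa using this
    have hs' := am_ne (K := K) (ne_of_notin hs)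
    have hy' : algebraMap B K s * (y : K) = algebraMap B K b := congrArg (algebraMap (Lo K P) K) hy
    have e1 : y • ((σ i : K) / algebraMap B K x) =
        (⟨(algebraMap B K s)⁻¹, inv_mem_Lo hs⟩ : Lo K P) • (c : K) := by
      change (y : K) * _ = (algebraMap B K s)⁻¹ * (c : K)
      field_simp
      linear_combination hc' + (σ i : K) * hy'
    rw [e1]
    exact (hint c).smul _
  · intro i hi; exact hint _
  · intro i hi i' hi'
    exact (Lo K (q i)).algebraMap_mem (w i')
  · intro i hi
    have : (σ i : K) ≠ 0 := am_ne (K := K) (ne_of_notin (hσ i hi))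
    exact div_ne_zero this hxK
  · intro i hi
    rw [hxω]; exact inv_mem_Lo (hσ i hi)
  · intro i hi a ha
    rw [hxx]
    obtain ⟨s, hs, b, hb⟩ := mem_Lo.1 a.2
    have hb0 : b ≠ 0 := by
      rintro rfl
      rw [map_zero] at hb
      rcases mul_eq_zero.1 hb with h | h
      · exact am_ne (ne_of_notin hs) h
      · exact ha (Subtype.ext h)
    have hxq : algebraMap B (IC B K) x ∈ q i := by
      change x ∈ (q i).comap _; rw [hP i]; exact hxP
    have hb1 : algebraMap B (IC B K) b ≠ 0 := by
      intro h
      have := congrArg (algebraMap (IC B K) K) h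
      rw [← IsScalarTower.algebraMap_apply, map_zero] at this
      exact am_ne hb0 this
    obtain ⟨N, hN⟩ := arch (K := K) (hq i) hb1 hxq
    refine ⟨N, ?_⟩
    rw [← IsScalarTower.algebraMap_apply, ← IsScalarTower.algebraMap_apply] at hN
    have hs' := am_ne (K := K) (ne_of_notin hs)
    have ha' : (a : K) ≠ 0 := fun h => ha (Subtype.ext h)
    have e2 : algebraMap B K x ^ N / (a : K) =
        algebraMap B K s * (algebraMap B K x ^ N / algebraMap B K b) := by
      rw [← hb]; field_simp
    change algebraMap B K x ^ N / (a : K) ∈ Lo K (q i)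
    rw [e2]
    exact (Lo K (q i)).mul_mem (Lo_le (hP i) ((Lo K P).algebraMap_mem s)) hN
  · intro i hi i' hi'
    rcases hωω i hi i' hi' with h | h
    · exact Or.inl h
    · right; simp only [h]
  · intro i hi
    rw [hxx]
    exact hind i hi

/-- number of height one primes over `P` -/
lemma count_primes {P : Ideal B} [P.IsPrime] {x : B} (hx : x ≠ 0) (hxP : x ∈ P) (h : ℕ)
    (hh : PL K P x ≤ h) (r : ℕ) (q : ℕ → Ideal (IC B K)) (hq : ∀ i, H1 (q i))
    (hP : ∀ i, (q i).comap (algebraMap B (IC B K)) = P)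
    (hinj : ∀ i < r, ∀ i' < r, q i = q i' → i = i') : r ≤ h := by
  have : ∀ i, (q i).IsPrime := fun i => (hq i).prime
  have hx1 : algebraMap B (IC B K) x ≠ 0 := by
    intro h
    have := congrArg (algebraMap (IC B K) K) h
    rw [← IsScalarTower.algebraMap_apply, map_zero] at this
    exact am_ne hx this
  have hxK := am_ne (K := K) hx
  have hom := fun i => omega (K := K) (hq i) hx1 (q '' Set.Iio r \ {q i})
    (((Set.finite_Iio r).image q).sdiff) (by
      rintro q' ⟨⟨j, hj, rfl⟩, hne⟩
      exact ⟨hq j, hne⟩)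
  choose σ hσ he hF using hom
  have hmem : ∀ i < r, ∀ i' < r, i' ≠ i → (σ i' : K) / algebraMap B K x ∈ Lo K (q i) := by
    intro i hi i' hi' hne
    have := hF i' (q i) ⟨⟨i, hi, rfl⟩, fun h => hne (hinj i hi i' hi' h).symm⟩
    rwa [← IsScalarTower.algebraMap_apply] at this
  refine bound_glob hx hxP h hh r q hq hP (fun _ => 1) σ (fun i _ => hσ i) (fun i _ => ?_) ?_ ?_
  · rw [← hP i]; exact he i
  · intro i hi i' hi'
    by_cases hne : i' = i
    · right; rw [hne]
    · left; exact hmem i hi i' hi' hne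
  · intro i hi hmem1
    have : {z : K | ∃ i' < i, (σ i' : K) / algebraMap B K x ∉ Lo K (q i) ∧ z = ((1 : IC B K) : K)} = ∅ := by
      ext z
      simp only [Set.mem_ofPred_eq, Set.mem_empty_iff_false, iff_false]
      rintro ⟨i', hi', hn, -⟩
      exact hn (hmem i hi i' (hi'.trans hi) hi'.ne)
    rw [this, Submodule.span_empty, bot_sup_eq] at hmem1
    obtain ⟨v, hv, hv1⟩ := hmem1
    have hv1 : algebraMap B K x * v = 1 := by simpa using hv1
    have hxq : algebraMap B (IC B K) x ∈ q i := by
      change x ∈ (q i).comap _; rw [hP i]; exact hxP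
    apply notin_Lo (K := K) hxq hx1
    rw [← IsScalarTower.algebraMap_apply, ← eq_inv_of_mul_eq_one_right hv1]
    exact hv

/-- spanning by finitely many elements modulo `x Lo` -/
lemma span_fin {q : Ideal (IC B K)} (hq : H1 q) [q.IsPrime] {P : Ideal B} [P.IsPrime]
    (hP : q.comap (algebraMap B (IC B K)) = P) {x : B} (hx : x ≠ 0) (hxP : x ∈ P)
    (X : Set (IC B K)) : ∃ (r : ℕ) (u : ℕ → IC B K), (∀ i < r, u i ∈ X) ∧
    ∀ y ∈ X, (y : K) ∈ (Subalgebra.toSubmodule (VB q hP)).map (LinearMap.mulLeft (Lo K P) (algebraMap B K x)) ⊔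
      Submodule.span (Lo K P) ((fun i => (u i : K)) '' Set.Iio r) := by
  obtain ⟨h, hh⟩ := PL_fin (K := K) (P := P) hx
  have hx1 : algebraMap B (IC B K) x ≠ 0 := by
    intro h
    have := congrArg (algebraMap (IC B K) K) h
    rw [← IsScalarTower.algebraMap_apply, map_zero] at this
    exact am_ne hx this
  obtain ⟨σ, hσ, he, -⟩ := omega (K := K) hq hx1 ∅ Set.finite_empty (by simp)
  rw [hP] at he
  obtain ⟨r, u, hu, hX⟩ := greedy ((Subalgebra.toSubmodule (VB q hP)).map
    (LinearMap.mulLeft (Lo K P) (algebraMap B K x))) ((fun y : IC B K => (y : K)) '' X) h (by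
      intro r u hu hind
      choose! w hwX hw using hu
      refine bound_glob hx hxP h hh r (fun _ => q) (fun _ => hq) (fun _ => hP) w (fun _ => σ)
        (fun _ _ => hσ) (fun _ _ => he) (fun _ _ _ _ => Or.inr rfl) (fun i hi hcon => hind i hi ?_)
      rw [← hw i hi, sup_comm]
      have hle : Submodule.span (Lo K P) {z : K | ∃ i' < i, (σ : K) / algebraMap B K x ∉ Lo K q ∧ z = w i'} ≤
          Submodule.span (Lo K P) (u '' Set.Iio i) := by
        apply Submodule.span_mono
        rintro _ ⟨i', hi', -, rfl⟩
        exact ⟨i', hi', (hw i' (hi'.trans hi)).symm⟩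
      exact (sup_le_sup hle le_rfl) hcon)
  choose! w hwX hw using hu
  refine ⟨r, w, hwX, fun y hy => ?_⟩
  have : (fun i => (w i : K)) '' Set.Iio r = u '' Set.Iio r :=
    Set.image_congr (fun i hi => hw i hi)
  rw [this]
  exact hX ⟨y, hy, rfl⟩

end glob2
end Pf

namespace Pf

universe u v
section glob3

variable {B : Type u} [CommRing B] [IsDomain B] [IsNoetherianRing B] {K : Type v} [Field K] [Algebra B K]
  [IsFractionRing B K]

lemma am_ne1 {x : B} (hx : x ≠ 0) : algebraMap B (IC B K) x ≠ 0 := by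
  intro h
  have := congrArg (algebraMap (IC B K) K) h
  rw [← IsScalarTower.algebraMap_apply, map_zero] at this
  exact am_ne hx this

lemma assoc_of_H1 {q : Ideal (IC B K)} (hq : H1 q) {x : B} (hx : x ≠ 0)
    (hxq : algebraMap B (IC B K) x ∈ q) :
    q.comap (algebraMap B (IC B K)) ∈ associatedPrimes B (B ⧸ Ideal.span {x}) := by
  have := hq.prime
  set P := q.comap (algebraMap B (IC B K)) with hP
  have hxP : x ∈ P := hxq
  have hPp : P.IsPrime := inferInstanceAs (Ideal.comap _ q).IsPrime
  have hxK := am_ne (K := K) hx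
  have hpos : 0 < PL K P x := by
    rw [pos_iff_ne_zero]
    intro h0
    have := count_primes (K := K) hx hxP 0 (by rw [h0]; simp) 1 (fun _ => q) (fun _ => hq)
      (fun _ => hP.symm) (by intros; omega)
    omega
  obtain ⟨⟨z, hz1, N, hzN⟩, hz0⟩ := @exists_ne _ (Module.length_pos_iff.1 hpos) 0
  obtain ⟨z, rfl⟩ := Submodule.Quotient.mk_surjective _ z
  have hz0 : z ∉ Lo K P := by
    intro h
    apply hz0
    apply Subtype.ext
    change Submodule.Quotient.mk z = 0
    rw [Submodule.Quotient.mk_eq_zero]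
    exact Submodule.mem_one.2 ⟨⟨z, h⟩, rfl⟩
  have hmem : ∀ y : Lo K P, y • (Submodule.Quotient.mk z : K ⧸ (1 : Submodule (Lo K P) K)) = 0 →
      (y : K) * z ∈ Lo K P := by
    intro y hy
    rw [← Submodule.Quotient.mk_smul, Submodule.Quotient.mk_eq_zero] at hy
    obtain ⟨c, hc⟩ := Submodule.mem_one.1 hy
    have : (y : K) * z = c := hc.symm
    rw [this]; exact c.2
  rw [pow_one] at hz1
  obtain ⟨s, hs, b, hb⟩ := mem_Lo.1 (hmem _ hz1)
  have hb : algebraMap B K s * (algebraMap B K x * z) = algebraMap B K b := hb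
  have hsK := am_ne (K := K) (ne_of_notin hs)
  let M : Submodule B (B ⧸ Ideal.span {x}) := Submodule.span B {Ideal.Quotient.mk _ b}
  have hann : ∀ c : B, c ∈ Module.annihilator B M ↔ ∃ d, c * b = d * x := by
    intro c
    rw [Submodule.mem_annihilator_span_singleton]
    change Ideal.Quotient.mk _ (c * b) = 0 ↔ _
    rw [Ideal.Quotient.eq_zero_iff_mem, Ideal.mem_span_singleton']
    exact ⟨fun ⟨d, h⟩ => ⟨d, h.symm⟩, fun ⟨d, h⟩ => ⟨d, h.symm⟩⟩
  have hmin : P ∈ (Module.annihilator B M).minimalPrimes := by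
    refine ⟨⟨inferInstance, ?_⟩, ?_⟩
    · intro c hc
      by_contra hcP
      obtain ⟨d, hd⟩ := (hann c).1 hc
      apply hz0
      refine mem_Lo.2 ⟨c * s, fun h => (hPp.mem_or_mem h).elim hcP hs, d, ?_⟩
      have hd' : algebraMap B K c * algebraMap B K b = algebraMap B K d * algebraMap B K x := by
        rw [← map_mul, hd, map_mul]
      apply mul_right_cancel₀ hxK
      rw [map_mul]
      linear_combination hd' + algebraMap B K c * hb
    · rintro p ⟨hp, hpI⟩ hpP c hc
      have h1 := hmem (algebraMap B (Lo K P) c ^ N) (hzN _ (Ideal.pow_mem_pow (am_mem_max hc) N))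
      obtain ⟨t, ht, a, h2⟩ := mem_Lo.1 h1
      have h2 : algebraMap B K t * (algebraMap B K c ^ N * z) = algebraMap B K a := h2
      have h3 : t * c ^ N ∈ Module.annihilator B M := by
        rw [hann]
        refine ⟨s * a, ?_⟩
        apply IsFractionRing.injective B K
        simp only [map_mul, map_pow]
        linear_combination algebraMap B K s * algebraMap B K x * h2 - algebraMap B K t * algebraMap B K c ^ N * hb
      rcases hp.mem_or_mem (hpI h3) with h | h
      · exact absurd (hpP h) ht
      · exact hp.mem_of_pow_mem _ h
  have hfin : Module.Finite B M := inferInstance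
  have := Module.associatedPrimes.minimalPrimes_annihilator_subset_associatedPrimes B M hmin
  exact associatedPrimes.subset_of_injective M.injective_subtype this

lemma fin_H1 {x : B} (hx : x ≠ 0) :
    {q : Ideal (IC B K) | H1 q ∧ algebraMap B (IC B K) x ∈ q}.Finite := by
  apply Set.Finite.of_finite_fibers (fun q => q.comap (algebraMap B (IC B K)))
  · apply (associatedPrimes.finite B (B ⧸ Ideal.span {x})).subset
    rintro _ ⟨q, ⟨hq, hxq⟩, rfl⟩
    exact assoc_of_H1 hq hx hxq
  · rintro P ⟨q, ⟨hq, hxq⟩, rfl⟩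
    by_contra hinf
    have := hq.prime
    let P := q.comap (algebraMap B (IC B K))
    have hxP : x ∈ P := hxq
    obtain ⟨h, hh⟩ := PL_fin (K := K) (P := P) hx
    let f := Set.Infinite.natEmbedding _ hinf
    have := count_primes (K := K) hx hxP h hh (h+1) (fun i => f i) (fun i => (f i).2.1.1)
      (fun i => (f i).2.2) (fun i _ i' _ hii => f.injective (Subtype.ext hii))
    omega

lemma exists_in_base {q : Ideal (IC B K)} (hq : H1 q) : ∃ x : B, x ≠ 0 ∧ algebraMap B (IC B K) x ∈ q := by
  have : q.comap (algebraMap B (IC B K)) ≠ ⊥ := Ideal.IsIntegral.comap_ne_bot B hq.ne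
  obtain ⟨x, hx, h0⟩ := Submodule.exists_mem_ne_zero_of_ne_bot this
  exact ⟨x, h0, hx⟩

/-- every nonzero element of the integral closure divides one from the base -/
lemma fin_H1' {t : IC B K} (ht : t ≠ 0) : {q : Ideal (IC B K) | H1 q ∧ t ∈ q}.Finite := by
  have : (Ideal.span {t}).comap (algebraMap B (IC B K)) ≠ ⊥ :=
    Ideal.IsIntegral.comap_ne_bot B (by simpa using ht)
  obtain ⟨x, hx, h0⟩ := Submodule.exists_mem_ne_zero_of_ne_bot this
  apply (fin_H1 (K := K) h0).subset
  rintro q ⟨hq, htq⟩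
  exact ⟨hq, (Ideal.span_singleton_le_iff_mem _).2 htq hx⟩

lemma IC_closed : IsIntegrallyClosed (IC B K) :=
  (isIntegrallyClosed_iff_isIntegrallyClosedIn K).2 inferInstance

lemma mem_Lo_div {q : Ideal (IC B K)} [q.IsPrime] {z : Lo K q} :
    z ∈ maximalIdeal (Lo K q) ↔ ∃ s, s ∉ q ∧ ∃ a ∈ q, algebraMap (IC B K) K s * z = algebraMap (IC B K) K a := by
  rw [← IsLocalization.AtPrime.map_eq_maximalIdeal q (Lo K q),
    IsLocalization.mem_map_algebraMap_iff q.primeCompl]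
  constructor
  · rintro ⟨⟨⟨b, hb⟩, ⟨s, hs⟩⟩, h⟩
    refine ⟨s, hs, b, hb, ?_⟩
    have := congrArg (algebraMap (Lo K q) K) h
    rw [mul_comm]; exact this
  · rintro ⟨s, hs, a, ha, h⟩
    refine ⟨⟨⟨a, ha⟩, ⟨s, hs⟩⟩, ?_⟩
    apply Subtype.ext
    rw [mul_comm]; exact h

lemma max_fg {q : Ideal (IC B K)} (hq : H1 q) [q.IsPrime] : (maximalIdeal (Lo K q)).FG := by
  classical
  obtain ⟨x, hx, hxq⟩ := exists_in_base hq
  set P := q.comap (algebraMap B (IC B K)) with hP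
  obtain ⟨r, u, hu, hX⟩ := span_fin hq hP.symm hx hxq (q : Set (IC B K))
  refine ⟨insert (algebraMap _ _ (algebraMap B (IC B K) x)) ((Finset.range r).image fun i => algebraMap (IC B K) (Lo K q) (u i)), ?_⟩
  set M := Submodule.span (Lo K q) (↑(insert (algebraMap (IC B K) (Lo K q) (algebraMap B (IC B K) x))
    ((Finset.range r).image fun i => algebraMap (IC B K) (Lo K q) (u i))) : Set (Lo K q)) with hM
  have hmax : ∀ y ∈ q, algebraMap (IC B K) (Lo K q) y ∈ maximalIdeal (Lo K q) := by
    intro y hy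
    rw [← IsLocalization.AtPrime.map_eq_maximalIdeal q (Lo K q)]
    exact Ideal.mem_map_of_mem _ hy
  apply le_antisymm
  · apply Submodule.span_le.2
    intro z hz
    rcases Finset.mem_insert.1 (Finset.mem_coe.1 hz) with rfl | h
    · exact hmax _ hxq
    · obtain ⟨i, hi, rfl⟩ := Finset.mem_image.1 h
      exact hmax _ (hu i (Finset.mem_range.1 hi))
  · let MK : Submodule (Lo K q) K := M.map (Algebra.linearMap (Lo K q) K)
    have hMK : ∀ y ∈ q, (y : K) ∈ MK := by
      intro y hy
      obtain ⟨a, ⟨v, hv, rfl⟩, b, hb, hab⟩ := Submodule.mem_sup.1 (hX y hy)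
      rw [← hab]
      apply MK.add_mem
      · refine ⟨(⟨v, hv⟩ : Lo K q) • algebraMap _ _ (algebraMap B (IC B K) x), M.smul_mem _
          (Submodule.subset_span (by simp)), ?_⟩
        change v * algebraMap B K x = algebraMap B K x * v
        ring
      · clear hab
        induction hb using Submodule.span_induction with
        | mem z hz =>
          obtain ⟨i, hi, rfl⟩ := hz
          refine ⟨algebraMap (IC B K) (Lo K q) (u i), Submodule.subset_span ?_, rfl⟩
          rw [Finset.mem_coe]
          apply Finset.mem_insert_of_mem
          exact Finset.mem_image.2 ⟨i, Finset.mem_range.2 hi, rfl⟩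
        | zero => exact MK.zero_mem
        | add a b _ _ ha hb => exact MK.add_mem ha hb
        | smul c a _ ha =>
          exact MK.smul_mem (⟨c, Lo_le hP.symm c.2⟩ : Lo K q) ha
    intro z hz
    obtain ⟨s, hs, a, ha, h⟩ := mem_Lo_div.1 hz
    have hsK := am_ne (K := K) (ne_of_notin hs)
    obtain ⟨m, hm, hma⟩ := MK.smul_mem (⟨_, inv_mem_Lo hs⟩ : Lo K q) (hMK a ha)
    have : m = z := by
      apply Subtype.ext
      change (m : K) = _ at hma
      rw [hma]
      change (algebraMap (IC B K) K s)⁻¹ * algebraMap (IC B K) K a = z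
      rw [← h]; field_simp
    rwa [← this]

lemma unif {q : Ideal (IC B K)} (hq : H1 q) [q.IsPrime] :
    ∃ t ∈ q, t ≠ 0 ∧ ∀ y ∈ q, (y : K) / (t : K) ∈ Lo K q := by
  have hprimes : ∀ I : Ideal (Lo K q), I.IsPrime → I ≠ ⊥ → I = maximalIdeal (Lo K q) := by
    intro I hI hne
    have h1 := (IsLocalization.isPrime_iff_isPrime_disjoint q.primeCompl (Lo K q) I).1 hI
    have h2 : I.under (IC B K) ≤ q := by
      intro y hy
      by_contra hyq
      exact Set.disjoint_left.1 h1.2 hyq hy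
    have h3 := IsLocalization.map_under q.primeCompl (Lo K q) I
    rcases hq.mn _ h1.1 h2 with h | h
    · rw [h, Ideal.map_bot] at h3; exact absurd h3.symm hne
    · rw [h, IsLocalization.AtPrime.map_eq_maximalIdeal q (Lo K q)] at h3; exact h3.symm
  have hN : IsNoetherianRing (Lo K q) := IsNoetherianRing.of_prime_ne_bot (fun I hI hne => by
    rw [hprimes I hI hne]; exact max_fg hq)
  obtain ⟨x, hx, hxq⟩ := exists_in_base hq
  have hmaxne : maximalIdeal (Lo K q) ≠ ⊥ := by
    intro h
    have : algebraMap (IC B K) (Lo K q) (algebraMap B (IC B K) x) ∈ maximalIdeal (Lo K q) := by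
      rw [← IsLocalization.AtPrime.map_eq_maximalIdeal q (Lo K q)]
      exact Ideal.mem_map_of_mem _ hxq
    rw [h, Ideal.mem_bot] at this
    have h2 := congrArg (algebraMap (Lo K q) K) this
    rw [map_zero] at h2
    exact am_ne (K := K) hx h2
  have hfield : ¬ IsField (Lo K q) := isField_iff_maximalIdeal_eq.not.mpr hmaxne
  have hcl : IsIntegrallyClosed (Lo K q) := by
    have := IC_closed (B := B) (K := K)
    exact isIntegrallyClosed_of_isLocalization _ q.primeCompl q.primeCompl_le_nonZeroDivisors
  have hiff : (IsIntegrallyClosed (Lo K q) ∧ ∃! P : Ideal (Lo K q), P ≠ ⊥ ∧ P.IsPrime) ↔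
      (maximalIdeal (Lo K q)).IsPrincipal := (IsDiscreteValuationRing.TFAE (Lo K q) hfield).out 3 4
  have hpr : (maximalIdeal (Lo K q)).IsPrincipal := hiff.1
      ⟨hcl, maximalIdeal (Lo K q), ⟨hmaxne, inferInstance⟩, fun I hI => hprimes I hI.2 hI.1⟩
  obtain ⟨ϖ, hϖ⟩ := hpr
  have hϖm : ϖ ∈ maximalIdeal (Lo K q) := by rw [hϖ]; exact Submodule.mem_span_singleton_self _
  obtain ⟨s, hs, t, ht, h⟩ := mem_Lo_div.1 hϖm
  have hsK := am_ne (K := K) (ne_of_notin hs)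
  have hϖ0 : (ϖ : K) ≠ 0 := by
    intro h0
    have : ϖ = 0 := Subtype.ext h0
    rw [this] at hϖ
    exact hmaxne (by rw [hϖ]; simp)
  refine ⟨t, ht, ?_, ?_⟩
  · rintro rfl
    rw [map_zero] at h
    exact mul_ne_zero hsK hϖ0 h
  · intro y hy
    have hym : algebraMap (IC B K) (Lo K q) y ∈ maximalIdeal (Lo K q) := by
      rw [← IsLocalization.AtPrime.map_eq_maximalIdeal q (Lo K q)]
      exact Ideal.mem_map_of_mem _ hy
    rw [hϖ] at hym
    obtain ⟨c, hc⟩ := Submodule.mem_span_singleton.1 hym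
    have hc : (c : K) * ϖ = y := congrArg (algebraMap (Lo K q) K) hc
    have h' : (t : K) = algebraMap (IC B K) K s * ϖ := h.symm
    have : (y : K) / t = c * (algebraMap (IC B K) K s)⁻¹ := by
      rw [← hc, h']; field_simp
    rw [this]
    exact (Lo K q).mul_mem c.2 (inv_mem_Lo hs)

lemma span_clear {P : Ideal B} [P.IsPrime] (u : ℕ → IC B K) (I : Set ℕ) {n : K}
    (hn : n ∈ Submodule.span (Lo K P) ((fun i => (u i : K)) '' I)) :
    ∃ s, s ∉ P ∧ ∃ m ∈ Submodule.span B (u '' I), algebraMap B K s * n = m := by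
  have h1 : (1 : B) ∉ P := fun h => Ideal.IsPrime.ne_top ‹_› ((Ideal.eq_top_iff_one _).2 h)
  induction hn using Submodule.span_induction with
  | mem z hz =>
    obtain ⟨i, hi, rfl⟩ := hz
    exact ⟨1, h1, u i, Submodule.subset_span ⟨i, hi, rfl⟩, by simp⟩
  | zero => exact ⟨1, h1, 0, Submodule.zero_mem _, by simp⟩
  | add a b _ _ ha hb =>
    obtain ⟨s, hs, m, hm, h⟩ := ha
    obtain ⟨s', hs', m', hm', h'⟩ := hb
    refine ⟨s * s', fun hh => (Ideal.IsPrime.mem_or_mem ‹_› hh).elim hs hs', s' • m + s • m',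
      Submodule.add_mem _ (Submodule.smul_mem _ _ hm) (Submodule.smul_mem _ _ hm'), ?_⟩
    have e : ((s' • m + s • m' : IC B K) : K) = algebraMap B K s' * m + algebraMap B K s * m' := by
      simp [Algebra.smul_def]
    rw [e, map_mul, ← h, ← h']; ring
  | smul c a _ ha =>
    obtain ⟨s, hs, m, hm, h⟩ := ha
    obtain ⟨s', hs', d, h'⟩ := mem_Lo.1 c.2
    refine ⟨s * s', fun hh => (Ideal.IsPrime.mem_or_mem ‹_› hh).elim hs hs', d • m,
      Submodule.smul_mem _ _ hm, ?_⟩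
    have e : ((d • m : IC B K) : K) = algebraMap B K d * m := by
      simp [Algebra.smul_def]
    have e2 : c • a = (c : K) * a := rfl
    rw [e, e2, map_mul, ← h, ← h']; ring

lemma resid {q : Ideal (IC B K)} (hq : H1 q) [q.IsPrime] : ∃ (r : ℕ) (u : ℕ → IC B K), ∀ y : IC B K,
    ∃ s : B, algebraMap B (IC B K) s ∉ q ∧ ∃ m ∈ Submodule.span B (u '' Set.Iio r),
      algebraMap B (IC B K) s * y - m ∈ q := by
  obtain ⟨x, hx, hxq⟩ := exists_in_base hq
  set P := q.comap (algebraMap B (IC B K)) with hP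
  obtain ⟨r, u, hu, hX⟩ := span_fin hq hP.symm hx hxq Set.univ
  refine ⟨r, u, fun y => ?_⟩
  obtain ⟨a, ⟨v, hv, rfl⟩, n, hn, hab⟩ := Submodule.mem_sup.1 (hX y trivial)
  obtain ⟨s, hs, m, hm, h⟩ := span_clear u _ hn
  refine ⟨s, hs, m, hm, ?_⟩
  have hab : algebraMap B K x * v + n = y := hab
  obtain ⟨ρ, hρ, c, hc⟩ := mem_Lo.1 (show v ∈ Lo K q from hv)
  have h2 : ρ * (algebraMap B (IC B K) s * y - m) = algebraMap B (IC B K) x * (algebraMap B (IC B K) s * c) := by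
    apply IsFractionRing.injective (IC B K) K
    simp only [map_mul, map_sub, ← IsScalarTower.algebraMap_apply]
    have h3 : algebraMap (IC B K) K y = y := rfl
    have h4 : algebraMap (IC B K) K m = m := rfl
    rw [h3, h4, ← hab, ← h, ← hc]; ring
  have h5 : ρ * (algebraMap B (IC B K) s * y - m) ∈ q := by
    rw [h2]; exact q.mul_mem_right _ hxq
  exact (hq.prime.mem_or_mem h5).resolve_left hρ

end glob3
end Pf

namespace Pf

universe u v
section glob4

open Polynomial in
lemma inv_lemma {W : Type*} [CommRing W] [IsLocalRing W] {K : Type*} [Field K] [Algebra W K]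
    (hcl : ∀ z : K, IsIntegral W z → ∃ w, algebraMap W K w = z) (z : K) (n : ℕ) :
    ∀ (F : W[X]), F.natDegree ≤ n → aeval z F = 0 → (∃ k, IsUnit (F.coeff k)) →
    ∃ w, algebraMap W K w = z ∨ algebraMap W K w = z⁻¹ := by
  induction n with
  | zero =>
    rintro F hF h0 ⟨k, hk⟩
    rw [eq_C_of_natDegree_le_zero hF, aeval_C] at h0
    by_cases hk0 : k = 0
    · subst hk0
      exact absurd h0 (hk.map (algebraMap W K)).ne_zero
    · rw [coeff_eq_zero_of_natDegree_lt (by omega)] at hk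
      exact absurd hk not_isUnit_zero
  | succ n ih =>
    rintro F hF h0 ⟨k, hk⟩
    by_cases hlt : F.natDegree ≤ n
    · exact ih F hlt h0 ⟨k, hk⟩
    have hdeg : F.natDegree = n + 1 := by omega
    obtain ⟨b, hb⟩ := hcl _ (isIntegral_leadingCoeff_smul F z h0)
    rw [Algebra.smul_def] at hb
    have ha : F.leadingCoeff = F.coeff (n+1) := by rw [leadingCoeff, hdeg]
    rw [ha] at hb
    let F' := F.erase (n+1) + monomial n b
    have hF' : F'.natDegree ≤ n := by
      rw [natDegree_le_iff_coeff_eq_zero]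
      intro N hN
      simp only [F', coeff_add, coeff_monomial, if_neg hN.ne, add_zero, coeff_erase]
      split_ifs with h
      · rfl
      · exact coeff_eq_zero_of_natDegree_lt (by omega)
    have h0' : aeval z F' = 0 := by
      have := monomial_add_erase F (n+1)
      rw [← this] at h0
      simp only [map_add, aeval_monomial, F'] at h0 ⊢
      rw [hb]; rw [pow_succ] at h0
      linear_combination h0
    have hgen : IsUnit (F'.coeff n) → ∃ w, algebraMap W K w = z ∨ algebraMap W K w = z⁻¹ :=
      fun h => ih F' hF' h0' ⟨n, h⟩
    have hFn : F'.coeff n = F.coeff n + b := by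
      simp [F', coeff_erase]
    have hbu : IsUnit b → ∃ w, algebraMap W K w = z ∨ algebraMap W K w = z⁻¹ := by
      rintro ⟨b', rfl⟩
      refine ⟨F.coeff (n+1) * (b'⁻¹ : Wˣ), Or.inr ?_⟩
      have h1 : algebraMap W K (b' : W) ≠ 0 := (b'.isUnit.map (algebraMap W K)).ne_zero
      have h2 : algebraMap W K (b' : W) * algebraMap W K (b'⁻¹ : Wˣ) = 1 := by
        rw [← map_mul]; simp
      have hz : z ≠ 0 := by rintro rfl; simp [hb] at h1
      rw [map_mul]
      apply mul_right_cancel₀ hz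
      rw [inv_mul_cancel₀ hz]
      rw [hb] at h2
      linear_combination h2
    by_cases hk1 : k = n + 1
    · subst hk1
      obtain ⟨a, ha⟩ := hk
      have h2 : algebraMap W K (a : W) * algebraMap W K (a⁻¹ : Wˣ) = 1 := by
        rw [← map_mul]; simp
      refine ⟨b * (a⁻¹ : Wˣ), Or.inl ?_⟩
      rw [map_mul, hb, ← ha]
      linear_combination z * h2
    · by_cases hk2 : k = n
      · subst hk2
        by_cases hu : IsUnit b
        · exact hbu hu
        · apply hgen
          rw [hFn]
          by_contra hn
          have h3 : F.coeff k + b ∈ nonunits W := hn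
          have h4 : b ∈ nonunits W := hu
          rw [← mem_maximalIdeal] at h3 h4
          have := (maximalIdeal W).sub_mem h3 h4
          rw [add_sub_cancel_right, mem_maximalIdeal] at this
          exact this hk
      · have hk3 : k < n := by
          by_contra hh
          rw [coeff_eq_zero_of_natDegree_lt (by omega)] at hk
          exact absurd hk not_isUnit_zero
        refine ih F' hF' h0' ⟨k, ?_⟩
        have : F'.coeff k = F.coeff k := by
          simp only [F', coeff_add, coeff_monomial, coeff_erase]
          rw [if_neg hk1, if_neg (Ne.symm hk2), add_zero]
        rw [this]; exact hk

lemma ht_one {C : Type*} [CommRing C] [IsDomain C] {p q0 : Ideal C} [p.IsPrime] [q0.IsPrime]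
    (hp : p.height ≤ 1) (h : q0 ≤ p) : q0 = ⊥ ∨ q0 = p := by
  by_contra hcon
  push Not at hcon
  have h1 := Ideal.height_add_one_le_of_lt_of_isPrime (bot_lt_iff_ne_bot.2 hcon.1)
  have h2 := Ideal.height_add_one_le_of_lt_of_isPrime (lt_of_le_of_ne h hcon.2)
  have h3 : (1 : ℕ∞) ≤ q0.height := le_trans le_add_self h1
  have h4 : (1 : ℕ∞) + 1 ≤ 1 := (add_le_add_left h3 1).trans (h2.trans hp)
  exact absurd h4 (by decide)

variable {B : Type u} [CommRing B] [IsDomain B] [IsNoetherianRing B] {K : Type v} [Field K] [Algebra B K]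
  [IsFractionRing B K]

/-- reduce to annihilator prime -/
lemma red_ann (z : K) (hz : ¬ IsIntegral B z) : ∃ (b : B) (P : Ideal B), P.IsPrime ∧
    ¬ IsIntegral B (b • z) ∧ ∀ c : B, c ∈ P ↔ IsIntegral B (c • b • z) := by
  let S := Subalgebra.toSubmodule (IC B K)
  let M : Submodule B (K ⧸ S) := Submodule.span B {Submodule.Quotient.mk z}
  have hz0 : (⟨Submodule.Quotient.mk z, Submodule.mem_span_singleton_self _⟩ : M) ≠ 0 := by
    intro h
    have h' : (Submodule.Quotient.mk z : K ⧸ S) = 0 := congrArg Subtype.val h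
    rw [Submodule.Quotient.mk_eq_zero] at h'
    exact hz h'
  obtain ⟨P, hP, -⟩ := exists_le_isAssociatedPrime_of_isNoetherianRing B _ hz0
  obtain ⟨hPp, ⟨m, hm⟩, hPm⟩ := isAssociatedPrime_iff.1 hP
  obtain ⟨b, rfl⟩ := Submodule.mem_span_singleton.1 hm
  have hiff : ∀ c : B, c ∈ P ↔ IsIntegral B (c • b • z) := by
    intro c
    rw [hPm, Submodule.mem_colon_singleton, Submodule.mem_bot, Subtype.ext_iff]
    change c • b • (Submodule.Quotient.mk z : K ⧸ S) = 0 ↔ _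
    rw [← Submodule.Quotient.mk_smul, ← Submodule.Quotient.mk_smul, Submodule.Quotient.mk_eq_zero]
    exact Iff.rfl
  refine ⟨b, P, hPp, fun h => hPp.ne_top ((Ideal.eq_top_iff_one _).2 ((hiff 1).2 ?_)), hiff⟩
  rwa [one_smul]

lemma W_closed (q : Ideal (IC B K)) [q.IsPrime] (z : K) (hz : IsIntegral (Lo K q) z) :
    ∃ w, algebraMap (Lo K q) K w = z := by
  have := IC_closed (B := B) (K := K)
  have hcl : IsIntegrallyClosed (Lo K q) :=
    isIntegrallyClosed_of_isLocalization _ q.primeCompl q.primeCompl_le_nonZeroDivisors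
  exact IsIntegrallyClosed.isIntegral_iff.1 hz

lemma step_inv {P : Ideal B} [P.IsPrime] {z : K} (hzP : ∀ c ∈ P, IsIntegral B (c • z))
    {x : B} (hx : x ≠ 0) (hxP : x ∈ P) (q : Ideal (IC B K)) [q.IsPrime]
    (hq : q.comap (algebraMap B (IC B K)) = P) (hzq : z ∉ Lo K q) : z⁻¹ ∈ Lo K q := by
  obtain ⟨T, hT⟩ := IsNoetherian.noetherian P
  let C : Subalgebra (Lo K P) K := Algebra.adjoin (Lo K P) ((fun c : B => c • z) '' (T : Set B))
  have hCfg : (Subalgebra.toSubmodule C).FG := by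
    apply fg_adjoin_of_finite (T.finite_toSet.image _)
    rintro _ ⟨c, hc, rfl⟩
    exact (hzP c (hT ▸ Submodule.subset_span hc)).tower_top
  have hPC : ∀ c ∈ P, c • z ∈ C := by
    intro c hc
    rw [← hT] at hc
    induction hc using Submodule.span_induction with
    | mem c hc => exact Algebra.subset_adjoin ⟨c, hc, rfl⟩
    | zero => rw [zero_smul]; exact C.zero_mem
    | add a b _ _ ha hb => rw [add_smul]; exact C.add_mem ha hb
    | smul a b _ hb =>
      rw [smul_assoc, ← IsScalarTower.algebraMap_smul (Lo K P) a (b • z)]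
      exact C.smul_mem hb _
  have hCW : ∀ c ∈ C, c ∈ Lo K q := by
    intro c hc
    apply int_mem hq
    have : Module.Finite (Lo K P) C := ⟨(Submodule.fg_top _).2 hCfg⟩
    have := (IsIntegral.of_finite (Lo K P) (⟨c, hc⟩ : C))
    exact this.map C.val
  obtain ⟨k, p, r, hdeg, hrel⟩ := monic_rel C hCfg (algebraMap B (Lo K P) x) (am_ne' hx) (am_mem_max hxP) z (by
    intro y hy
    rw [← pow_one (maximalIdeal _)] at hy
    obtain ⟨s, hs, b, hb, h⟩ := mem_max_pow hy
    rw [pow_one] at hb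
    have hsK := am_ne (K := K) (ne_of_notin hs)
    have h' : algebraMap B K s * (y : K) = algebraMap B K b := congrArg (algebraMap (Lo K P) K) h
    have : y • z = (⟨_, inv_mem_Lo hs⟩ : Lo K P) • (b • z) := by
      change (y : K) * z = (algebraMap B K s)⁻¹ * (b • z)
      rw [Algebra.smul_def, ← h']; field_simp
    rw [this]
    exact C.smul_mem (hPC b hb) _)
  let φ : C →+* Lo K q :=
  { toFun := fun c => ⟨c, hCW c c.2⟩
    map_one' := rfl
    map_mul' := fun _ _ => rfl
    map_zero' := rfl
    map_add' := fun _ _ => rfl }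
  have hφ : ∀ f : Polynomial C, Polynomial.aeval z (f.map φ) = Polynomial.aeval z f := by
    intro f
    rw [Polynomial.aeval_def, Polynomial.eval₂_map, Polynomial.aeval_def]
    rfl
  let xw : Lo K q := algebraMap (IC B K) (Lo K q) (algebraMap B (IC B K) x)
  have hxw : xw ∈ maximalIdeal (Lo K q) := by
    rw [← IsLocalization.AtPrime.map_eq_maximalIdeal q (Lo K q)]
    apply Ideal.mem_map_of_mem
    change x ∈ q.comap _
    rw [hq]; exact hxP
  let F : Polynomial (Lo K q) := Polynomial.X ^ k - p.map φ - Polynomial.C xw * r.map φ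
  have hF : Polynomial.aeval z F = 0 := by
    have e1 : Polynomial.aeval z F = z ^ k - Polynomial.aeval z (p.map φ)
        - algebraMap (Lo K q) K xw * Polynomial.aeval z (r.map φ) := by
      rw [Polynomial.aeval_def, Polynomial.aeval_def, Polynomial.aeval_def]
      change Polynomial.eval₂ _ z (_ - _ - _) = _
      rw [Polynomial.eval₂_sub, Polynomial.eval₂_sub, Polynomial.eval₂_mul, Polynomial.eval₂_C,
        Polynomial.eval₂_X_pow]
    rw [e1, hφ, hφ, hrel]
    have : algebraMap B (Lo K P) x • Polynomial.aeval z r = algebraMap (Lo K q) K xw * Polynomial.aeval z r := rfl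
    rw [this]; ring
  have hFk : IsUnit (F.coeff k) := by
    have hpk : (p.map φ).coeff k = 0 := by
      rw [Polynomial.coeff_map, Polynomial.coeff_eq_zero_of_degree_lt hdeg, map_zero]
    simp only [F, Polynomial.coeff_sub, Polynomial.coeff_X_pow, if_true, hpk, sub_zero, Polynomial.coeff_C_mul]
    by_contra hn
    have h1 : 1 - xw * (r.map φ).coeff k ∈ maximalIdeal (Lo K q) := hn
    have h2 := (maximalIdeal (Lo K q)).add_mem h1 (Ideal.mul_mem_right ((r.map φ).coeff k) _ hxw)
    rw [sub_add_cancel] at h2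
    exact h2 isUnit_one
  obtain ⟨w, hw | hw⟩ := inv_lemma (W_closed q) z _ F le_rfl hF ⟨k, hFk⟩
  · exact absurd (hw ▸ w.2) hzq
  · rw [← hw]; exact w.2

lemma step_H1 {P : Ideal B} [P.IsPrime] {z : K} (hzP : ∀ c ∈ P, IsIntegral B (c • z))
    (hP0 : P ≠ ⊥) (q : Ideal (IC B K)) [hqp : q.IsPrime]
    (hq : q.comap (algebraMap B (IC B K)) = P) (hzq : z ∉ Lo K q) (hinv : z⁻¹ ∈ Lo K q) : H1 q := by
  have hz0 : z ≠ 0 := by rintro rfl; exact hzq (Lo K q).zero_mem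
  obtain ⟨ρ, hρ, a, ha⟩ := mem_Lo.1 hinv
  have ha' : (ρ : K) = a * z := by
    have h : (ρ : K) * z⁻¹ = a := ha
    rw [← h]; field_simp
  have haq : a ∈ q := by
    by_contra h
    apply hzq
    exact mem_Lo.2 ⟨a, h, ρ, ha'.symm⟩
  obtain ⟨T, hT⟩ := IsNoetherian.noetherian P
  let X : Set (IC B K) := {ρ, a} ∪ Set.range (fun c : T => (⟨(c : B) • z, hzP c (hT ▸ Submodule.subset_span c.2)⟩ : IC B K))
  have hXf : X.Finite := (Set.toFinite {ρ, a}).union (Set.finite_range _)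
  let C : Subalgebra B (IC B K) := Algebra.adjoin B X
  have hCfin : Module.Finite B C := ⟨(Submodule.fg_top _).2
    (fg_adjoin_of_finite hXf (fun x _ => Algebra.IsIntegral.isIntegral x))⟩
  have hCN : IsNoetherianRing C := IsNoetherianRing.of_finite B C
  have hint : Algebra.IsIntegral C (IC B K) := Algebra.IsIntegral.tower_top B
  have hintB : Algebra.IsIntegral B C := Algebra.IsIntegral.of_finite B C
  let ρ' : C := ⟨ρ, Algebra.subset_adjoin (by simp [X])⟩
  let a' : C := ⟨a, Algebra.subset_adjoin (by simp [X])⟩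
  let n := q.comap (algebraMap C (IC B K))
  have hn : n.IsPrime := inferInstanceAs (Ideal.comap _ q).IsPrime
  have hnP : n.comap (algebraMap B C) = P := by
    rw [← hq, Ideal.comap_comap, ← IsScalarTower.algebraMap_eq]
  have hTn : ∀ n0 : Ideal C, n0.IsPrime → a' ∈ n0 → n0 ≤ n → P ≤ n0.comap (algebraMap B C) := by
    intro n0 hn0 han hle
    rw [← hT, Submodule.span_le]
    intro c hc
    let y : C := ⟨⟨(c : B) • z, hzP c (hT ▸ Submodule.subset_span hc)⟩, Algebra.subset_adjoin
      (Or.inr ⟨⟨c, hc⟩, rfl⟩)⟩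
    have h1 : ρ' * algebraMap B C c = a' * y := by
      apply Subtype.ext; apply Subtype.ext
      change (ρ : K) * algebraMap B K c = a * (c • z)
      rw [ha', Algebra.smul_def]; ring
    have h2 : ρ' * algebraMap B C c ∈ n0 := by rw [h1]; exact n0.mul_mem_right _ han
    rcases hn0.mem_or_mem h2 with h | h
    · exact absurd (hle h) hρ
    · exact h
  have hmin : n ∈ (Ideal.span {a'}).minimalPrimes := by
    refine ⟨⟨hn, (Ideal.span_singleton_le_iff_mem _).2 haq⟩, ?_⟩
    rintro n0 ⟨hn0, han⟩ hle
    by_contra hlt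
    have hlt' : n0 < n := lt_of_le_not_ge hle hlt
    have := Ideal.IsIntegral.comap_lt_comap (R := B) hlt'
    rw [hnP] at this
    exact absurd (hTn n0 hn0 ((Ideal.span_singleton_le_iff_mem _).1 han) hle) (not_le_of_gt this)
  have hht := Ideal.height_le_one_of_isPrincipal_of_mem_minimalPrimes _ n hmin
  refine ⟨hqp, ?_, ?_⟩
  · rintro rfl
    apply hP0
    rw [← hq, ← RingHom.ker_eq_comap_bot, RingHom.ker_eq_bot_iff_eq_zero]
    intro x hx
    by_contra h0
    exact am_ne1 h0 hx
  · intro q0 hq0 hle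
    have hp0 : (q0.comap (algebraMap C (IC B K))).IsPrime := inferInstance
    rcases ht_one hht (Ideal.comap_mono hle : q0.comap (algebraMap C (IC B K)) ≤ n) with h | h
    · left; exact Ideal.IsIntegral.eq_bot_of_comap_eq_bot (R := C) h
    · right
      by_contra hne
      have := Ideal.IsIntegral.comap_lt_comap (R := C) (lt_of_le_of_ne hle hne)
      exact absurd h this.ne

theorem thmB (z : K) (hz : ¬ IsIntegral B z) : ∃ (q : Ideal (IC B K)) (_ : q.IsPrime), H1 q ∧ z ∉ Lo K q := by
  obtain ⟨b, P, hP, hbz, hiff⟩ := red_ann z hz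
  set z' := b • z with hz'
  let I : Ideal (IC B K) :=
  { carrier := {s | IsIntegral B ((s : K) * z')}
    zero_mem' := by simpa using isIntegral_zero
    add_mem' := by
      intro s t hs ht
      change IsIntegral B (((s + t : IC B K) : K) * z')
      push_cast
      rw [add_mul]; exact IsIntegral.add hs ht
    smul_mem' := by
      intro c s hs
      change IsIntegral B (((c * s : IC B K) : K) * z')
      push_cast
      rw [mul_assoc]; exact c.2.mul hs }
  have hIP : I.comap (algebraMap B (IC B K)) ≤ P := by
    intro c hc
    rw [hiff, Algebra.smul_def]
    exact hc
  obtain ⟨q, hIq, hqp, hq⟩ := Ideal.exists_ideal_over_prime_of_isIntegral P I hIP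
  have hzq : z' ∉ Lo K q := by
    intro h
    obtain ⟨s, hs, a, ha⟩ := mem_Lo.1 h
    apply hs
    apply hIq
    change IsIntegral B ((s : K) * z')
    have : (s : K) * z' = a := ha
    rw [this]; exact a.2
  obtain ⟨x, hx, hxP⟩ : ∃ x : B, x ≠ 0 ∧ x ∈ P := by
    obtain ⟨c, d, hd, h⟩ := IsFractionRing.div_surjective (A := B) z'
    have hd0 := nonZeroDivisors.ne_zero hd
    refine ⟨d, hd0, (hiff d).2 ?_⟩
    have := am_ne (K := K) hd0
    have e : d • z' = algebraMap B K c := by rw [← h, Algebra.smul_def]; field_simp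
    rw [e]; exact isIntegral_algebraMap
  have hzP : ∀ c ∈ P, IsIntegral B (c • z') := fun c hc => (hiff c).1 hc
  refine ⟨q, hqp, step_H1 hzP ?_ q hq hzq (step_inv hzP hx hxP q hq hzq), fun h => hzq ?_⟩
  · rintro rfl
    exact hx (by simpa using hxP)
  · rw [hz', ← IsScalarTower.algebraMap_smul (IC B K) b z]
    exact (Lo K q).smul_mem h _

end glob4
end Pf

namespace Pf
universe u v
section P10a
variable {B : Type u} [CommRing B]

lemma noeth_step {S : Type v} [AddCommGroup S] [Module B S] {J' J : Submodule B S} (hle : J' ≤ J)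
    {Q : Type*} [AddCommGroup Q] [Module B Q] (φ : J →ₗ[B] Q) [IsNoetherian B Q]
    (hker : ∀ y, φ y = 0 → (y : S) ∈ J') [IsNoetherian B (S ⧸ J)] : IsNoetherian B (S ⧸ J') := by
  have h1 : IsNoetherian B (J ⧸ LinearMap.ker φ) :=
    isNoetherian_of_injective ((LinearMap.ker φ).liftQ φ le_rfl) (by
      rw [← LinearMap.ker_eq_bot]
      exact Submodule.ker_liftQ_eq_bot _ _ _ le_rfl)
  refine isNoetherian_of_range_eq_ker ((LinearMap.ker φ).liftQ (J'.mkQ ∘ₗ J.subtype) ?_)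
    (Submodule.factor hle) ?_
  · intro y hy
    change J'.mkQ y = 0
    rw [Submodule.mkQ_apply, Submodule.Quotient.mk_eq_zero]
    exact hker y hy
  · apply le_antisymm
    · rintro _ ⟨y, rfl⟩
      obtain ⟨y, rfl⟩ := Submodule.mkQ_surjective _ y
      rw [LinearMap.mem_ker]
      change Submodule.factor hle (Submodule.Quotient.mk (y : S)) = 0
      change (Submodule.Quotient.mk (y : S) : S ⧸ J) = 0
      rw [Submodule.Quotient.mk_eq_zero]
      exact y.2
    · intro y hy
      obtain ⟨y, rfl⟩ := Submodule.mkQ_surjective _ y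
      rw [LinearMap.mem_ker] at hy
      change (Submodule.Quotient.mk (y : S) : S ⧸ J) = 0 at hy
      rw [Submodule.Quotient.mk_eq_zero] at hy
      exact ⟨Submodule.Quotient.mk ⟨y, hy⟩, rfl⟩

lemma noeth_mono {S : Type v} [AddCommGroup S] [Module B S] {J' J : Submodule B S} (hle : J' ≤ J)
    [IsNoetherian B (S ⧸ J')] : IsNoetherian B (S ⧸ J) :=
  isNoetherian_of_surjective (Submodule.factor hle) (LinearMap.range_eq_top.2 (Submodule.factor_surjective hle))

lemma noeth_pi {S : Type v} [AddCommGroup S] [Module B S] {ι : Type*} [Finite ι] {J' : Submodule B S}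
    (J : ι → Submodule B S) (hle : ∀ y, (∀ i, y ∈ J i) → y ∈ J')
    (h : ∀ i, IsNoetherian B (S ⧸ J i)) : IsNoetherian B (S ⧸ J') := by
  let f : S →ₗ[B] (∀ i, S ⧸ J i) := LinearMap.pi fun i => (J i).mkQ
  have h1 : IsNoetherian B (S ⧸ LinearMap.ker f) :=
    isNoetherian_of_injective ((LinearMap.ker f).liftQ f le_rfl) (by
      rw [← LinearMap.ker_eq_bot]
      exact Submodule.ker_liftQ_eq_bot _ _ _ le_rfl)
  refine noeth_mono (J' := LinearMap.ker f) ?_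
  intro y hy
  apply hle
  intro i
  have := congrFun hy i
  exact (Submodule.Quotient.mk_eq_zero _).1 this

variable [IsDomain B] [IsNoetherianRing B] {K : Type v} [Field K] [Algebra B K] [IsFractionRing B K]

/-- elements of `S` divisible by `d` in the local ring at `q` -/
def Jd (q : Ideal (IC B K)) [q.IsPrime] (d : K) : Submodule B (IC B K) where
  carrier := {y | (y : K) / d ∈ Lo K q}
  zero_mem' := by
    change ((0 : IC B K) : K) / d ∈ Lo K q
    rw [ZeroMemClass.coe_zero, zero_div]; exact (Lo K q).zero_mem
  add_mem' := by
    intro a b ha hb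
    change ((a + b : IC B K) : K) / d ∈ Lo K q
    push_cast
    rw [add_div]; exact (Lo K q).add_mem ha hb
  smul_mem' := by
    intro c a ha
    change ((c • a : IC B K) : K) / d ∈ Lo K q
    have : ((c • a : IC B K) : K) / d = (algebraMap B (IC B K) c) • ((a : K) / d) := by
      rw [Algebra.smul_def, Algebra.smul_def, mul_div_assoc']; rfl
    rw [this]
    exact (Lo K q).smul_mem ha _

lemma mem_Jd {q : Ideal (IC B K)} [q.IsPrime] {d : K} {y : IC B K} :
    y ∈ Jd q d ↔ (y : K) / d ∈ Lo K q := Iff.rfl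

lemma mem_S_of (z : K) (h : ∀ (q : Ideal (IC B K)) (_ : q.IsPrime), H1 q → z ∈ Lo K q) : IsIntegral B z := by
  by_contra hz
  obtain ⟨q, hq, h1, h2⟩ := thmB z hz
  exact h2 (h q hq h1)

lemma coe_mem_Lo (q : Ideal (IC B K)) [q.IsPrime] (y : IC B K) : (y : K) ∈ Lo K q :=
  (Lo K q).algebraMap_mem y

lemma noeth_J (q : Ideal (IC B K)) [q.IsPrime] (hq : H1 q) (hQ : IsNoetherian B (IC B K ⧸ q.restrictScalars B))
    {t : IC B K} (htq : t ∈ q) (ht0 : t ≠ 0) (htu : ∀ y ∈ q, (y : K) / (t : K) ∈ Lo K q) (n : ℕ) :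
    IsNoetherian B (IC B K ⧸ Jd q ((t : K) ^ n)) := by
  have htK : (t : K) ≠ 0 := fun h => ht0 (Subtype.ext h)
  obtain ⟨s, hs, hsF⟩ := sep_fin (K := K) hq ht0 ({q' | H1 q' ∧ t ∈ q'} \ {q}) ((fin_H1' ht0).subset Set.sdiff_subset)
    (fun q' h => ⟨h.1.1, h.2⟩)
  have hsK : (s : K) ≠ 0 := fun h => hs ((Subtype.ext h : s = 0) ▸ q.zero_mem)
  have hg : ∀ n : ℕ, ∀ y ∈ Jd q ((t : K) ^ n), IsIntegral B ((y : K) * ((s : K) / t) ^ n) := by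
    intro n y hy
    apply mem_S_of
    intro q' hq' h1
    by_cases hqq : q' = q
    · subst hqq
      have : (y : K) * ((s : K) / t) ^ n = (y : K) / t ^ n * (s : K) ^ n := by
        rw [div_pow]; ring
      rw [this]
      exact (Lo K q').mul_mem hy ((Lo K q').pow_mem (coe_mem_Lo _ _) _)
    · refine (Lo K q').mul_mem (coe_mem_Lo _ _) ((Lo K q').pow_mem ?_ _)
      by_cases htq' : t ∈ q'
      · exact hsF q' ⟨⟨h1, htq'⟩, hqq⟩
      · rw [div_eq_mul_inv]
        exact (Lo K q').mul_mem (coe_mem_Lo _ _) (inv_mem_Lo htq')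
  induction n with
  | zero =>
    have : Jd q ((t : K) ^ 0) = ⊤ := by
      rw [eq_top_iff]; intro y _
      rw [mem_Jd, pow_zero, div_one]; exact coe_mem_Lo _ _
    rw [this]
    infer_instance
  | succ n ih =>
    let ψ : Jd q ((t : K) ^ n) →ₗ[B] IC B K :=
    { toFun := fun y => ⟨_, hg n y y.2⟩
      map_add' := fun a b => Subtype.ext (by
        change ((a : K) + (b : K)) * _ = (a : K) * _ + (b : K) * _
        rw [add_mul])
      map_smul' := fun c a => Subtype.ext (by
        change (c • (a : K)) * _ = c • ((a : K) * _)
        rw [smul_mul_assoc]) }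
    refine noeth_step (J := Jd q ((t : K) ^ n)) ?_ ((q.restrictScalars B).mkQ ∘ₗ ψ) ?_
    · intro y hy
      rw [mem_Jd] at hy ⊢
      have : (y : K) / t ^ n = y / t ^ (n + 1) * t := by rw [pow_succ]; field_simp
      rw [this]
      exact (Lo K q).mul_mem hy (coe_mem_Lo _ _)
    · intro y hy
      have h1 : ψ y ∈ q := (Submodule.Quotient.mk_eq_zero _).1 hy
      have h2 := htu _ h1
      have h3 : (y : K) / t ^ (n + 1) = (((y : IC B K) : K) * ((s : K) / t) ^ n / t) * ((s : K)⁻¹) ^ n := by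
        rw [div_pow, inv_pow, pow_succ]; field_simp
      rw [mem_Jd, h3]
      exact (Lo K q).mul_mem h2 ((Lo K q).pow_mem (inv_mem_Lo hs) _)

lemma noeth_x (hQ : ∀ q : Ideal (IC B K), H1 q → IsNoetherian B (IC B K ⧸ q.restrictScalars B))
    {x : B} (hx : x ≠ 0) :
    IsNoetherian B (IC B K ⧸ LinearMap.range (LinearMap.lsmul B (IC B K) x)) := by
  have hxK : algebraMap B K x ≠ 0 := am_ne hx
  have hfin := fin_H1 (K := K) hx
  have : Finite ({q : Ideal (IC B K) | H1 q ∧ algebraMap B (IC B K) x ∈ q} : Set _) := hfin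
  have hp : ∀ i : ({q : Ideal (IC B K) | H1 q ∧ algebraMap B (IC B K) x ∈ q} : Set _), i.1.IsPrime :=
    fun i => i.2.1.prime
  refine noeth_pi (fun i : ({q : Ideal (IC B K) | H1 q ∧ algebraMap B (IC B K) x ∈ q} : Set _) =>
    haveI := hp i; Jd i.1 (algebraMap B K x)) ?_ ?_
  · intro y hy
    have h1 : IsIntegral B ((y : K) / algebraMap B K x) := by
      apply mem_S_of
      intro q' hq' h1
      by_cases hxq : algebraMap B (IC B K) x ∈ q'
      · exact hy ⟨q', h1, hxq⟩
      · rw [div_eq_mul_inv]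
        exact (Lo K q').mul_mem (coe_mem_Lo _ _) (inv_mem_Lo hxq)
    refine ⟨⟨_, h1⟩, Subtype.ext ?_⟩
    change x • ((y : K) / algebraMap B K x) = y
    rw [Algebra.smul_def]; field_simp
  · rintro ⟨q, hq, hxq⟩
    haveI := hq.prime
    obtain ⟨t, htq, ht0, htu⟩ := unif hq
    obtain ⟨N, hN⟩ := arch (K := K) hq (am_ne1 (K := K) hx) htq
    have := noeth_J q hq (hQ q hq) htq ht0 htu N
    refine noeth_mono (J' := Jd q ((t : K) ^ N)) ?_
    intro y hy
    rw [mem_Jd] at hy ⊢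
    have htK : (t : K) ≠ 0 := fun h => ht0 (Subtype.ext h)
    have : (y : K) / algebraMap B K x = y / t ^ N * (t ^ N / algebraMap B K x) := by field_simp
    rw [this]
    exact (Lo K q).mul_mem hy hN

lemma x_sep {x : B} (hx : x ≠ 0) (hxu : ¬ IsUnit (algebraMap B (IC B K) x)) {y : IC B K}
    (hy : ∀ k : ℕ, ∃ z : IC B K, y = x ^ k • z) : y = 0 := by
  have hxK : algebraMap B K x ≠ 0 := am_ne hx
  have h1 : ¬ IsIntegral B ((algebraMap B K x)⁻¹) := by
    intro h
    apply hxu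
    refine IsUnit.of_mul_eq_one ⟨_, h⟩ (Subtype.ext ?_)
    exact mul_inv_cancel₀ hxK
  obtain ⟨q, hqp, hq, hqx⟩ := thmB _ h1
  by_contra hy0
  have hyK : (y : K) ≠ 0 := fun h => hy0 (Subtype.ext h)
  have hxq : algebraMap B (IC B K) x ∈ q := by
    by_contra h
    exact hqx (inv_mem_Lo h)
  obtain ⟨N, hN⟩ := arch (K := K) hq hy0 hxq
  obtain ⟨z, hz⟩ := hy (N + 1)
  apply hqx
  have e : (algebraMap B K x)⁻¹ = (algebraMap B K x ^ N / y) * z := by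
    have : (y : K) = algebraMap B K x ^ (N + 1) * z := by
      rw [hz]
      change x ^ (N + 1) • (z : K) = _
      rw [Algebra.smul_def, map_pow]
    have hz0 : (z : K) ≠ 0 := by
      intro h; rw [h, mul_zero] at this; exact hyK this
    rw [this, pow_succ]; field_simp
  rw [e]
  exact (Lo K q).mul_mem hN (coe_mem_Lo _ _)
end P10a
end Pf

namespace Pf
universe u v
section P11a

lemma precomplete_pi {A : Type*} [CommRing A] (I : Ideal A) [IsPrecomplete I A] (n : ℕ) :
    IsPrecomplete I (Fin n → A) := by
  constructor
  intro f hf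
  have hmem : ∀ (k : ℕ) (v : Fin n → A), v ∈ (I ^ k • ⊤ : Submodule A (Fin n → A)) ↔ ∀ i, v i ∈ I ^ k := by
    intro k v
    constructor
    · intro hv i
      have := Submodule.mem_map_of_mem (f := LinearMap.proj (R := A) (φ := fun _ => A) i) hv
      rw [Submodule.map_smul''] at this
      exact (Submodule.smul_le.2 fun r hr m _ => Ideal.mul_mem_right _ _ hr) this
    · intro hv
      rw [← Finset.univ_sum_single v]
      refine Submodule.sum_mem _ fun i _ => ?_
      have : Pi.single i (v i) = (v i) • (Pi.single i 1 : Fin n → A) := by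
        rw [← Pi.single_smul, smul_eq_mul, mul_one]
      rw [this]
      exact Submodule.smul_mem_smul (hv i) trivial
  have key : ∀ i, ∃ L : A, ∀ k, f k i ≡ L [SMOD (I ^ k • ⊤ : Submodule A A)] := by
    intro i
    apply IsPrecomplete.prec (I := I) (M := A) inferInstance
    intro a b hab
    rw [SModEq.sub_mem, smul_eq_mul, Ideal.mul_top]
    exact (hmem a _).1 (SModEq.sub_mem.1 (hf hab)) i
  choose L hL using key
  refine ⟨L, fun k => ?_⟩
  rw [SModEq.sub_mem, hmem]
  intro i
  have := hL i k
  rwa [SModEq.sub_mem, smul_eq_mul, Ideal.mul_top] at this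

variable {A : Type v} [CommRing A] [IsLocalRing A] [IsNoetherianRing A] [IsAdicComplete (maximalIdeal A) A]

lemma fin_of_x {B : Type u} [CommRing B] [IsDomain B] [Algebra A B] [Module.Finite A B] [IsNoetherianRing B]
    {K : Type u} [Field K] [Algebra B K] [IsFractionRing B K] [Algebra A K] [IsScalarTower A B K]
    (hQ : ∀ q : Ideal (IC B K), H1 q → IsNoetherian B (IC B K ⧸ q.restrictScalars B))
    {x : A} (hxm : x ∈ maximalIdeal A) (hx : algebraMap A B x ≠ 0) : Module.Finite A (IC B K) := by
  have hN : ∀ k : ℕ, Module.Finite A (IC B K ⧸ LinearMap.range (LinearMap.lsmul B (IC B K) (algebraMap A B x ^ k))) := by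
    intro k
    have := noeth_x hQ (pow_ne_zero k hx)
    exact Module.Finite.trans B _
  have hintA : Algebra.IsIntegral A B := Algebra.IsIntegral.of_finite A B
  have hint : Algebra.IsIntegral A (IC B K) := Algebra.IsIntegral.trans B
  have hnu : ¬ IsUnit (algebraMap B (IC B K) (algebraMap A B x)) := by
    intro hu
    have hker : RingHom.ker (algebraMap A (IC B K)) ≤ maximalIdeal A :=
      le_maximalIdeal (RingHom.ker_ne_top _)
    obtain ⟨Q, hQm, hQc⟩ := Ideal.exists_ideal_over_maximal_of_isIntegral (S := IC B K) (maximalIdeal A) hker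
    have : x ∈ Q.comap (algebraMap A (IC B K)) := by rw [hQc]; exact hxm
    have h2 : algebraMap A (IC B K) x ∈ Q := this
    rw [IsScalarTower.algebraMap_apply A B (IC B K)] at h2
    exact hQm.ne_top (Ideal.eq_top_of_isUnit_mem _ h2 hu)
  have hH : IsHausdorff (maximalIdeal A) (IC B K) := by
    constructor
    intro y hy
    apply x_sep hx hnu
    intro k
    have := hN k
    have hz : (LinearMap.range (LinearMap.lsmul B (IC B K) (algebraMap A B x ^ k))).mkQ y = 0 := by
      apply IsHausdorff.haus (I := maximalIdeal A) inferInstance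
      intro n
      have h1 := SModEq.zero.1 (hy n)
      rw [SModEq.zero]
      have h2 := Submodule.mem_map_of_mem
        (f := (LinearMap.range (LinearMap.lsmul B (IC B K) (algebraMap A B x ^ k))).mkQ.restrictScalars A) h1
      rw [Submodule.map_smul''] at h2
      exact Submodule.smul_mono le_rfl le_top h2
    obtain ⟨z, hz⟩ := (Submodule.Quotient.mk_eq_zero _).1 hz
    exact ⟨z, hz.symm⟩
  have := hN 1
  obtain ⟨n, v, hv⟩ := Module.Finite.exists_fin (R := A)
    (M := IC B K ⧸ LinearMap.range (LinearMap.lsmul B (IC B K) (algebraMap A B x ^ 1)))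
  choose w hw using fun i => Submodule.mkQ_surjective _ (v i)
  have := precomplete_pi (maximalIdeal A) n
  refine Module.Finite.of_surjective (Fintype.linearCombination A w)
    (surjective_of_mkQ_comp_surjective (I := maximalIdeal A) ?_)
  intro y
  obtain ⟨y, rfl⟩ := Submodule.mkQ_surjective _ y
  have hy : (LinearMap.range (LinearMap.lsmul B (IC B K) (algebraMap A B x ^ 1))).mkQ y ∈
    Submodule.span A (Set.range v) := by rw [hv]; trivial
  obtain ⟨c, hc⟩ := (Submodule.mem_span_range_iff_exists_fun A).1 hy
  refine ⟨c, ?_⟩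
  change Submodule.Quotient.mk _ = Submodule.Quotient.mk _
  rw [Submodule.Quotient.eq]
  have h3 : (LinearMap.range (LinearMap.lsmul B (IC B K) (algebraMap A B x ^ 1))).mkQ
      (Fintype.linearCombination A w c - y) = 0 := by
    rw [map_sub, ← hc, Fintype.linearCombination_apply, map_sum, sub_eq_zero]
    refine Finset.sum_congr rfl fun i _ => ?_
    rw [← hw]; rfl
  obtain ⟨z, hz⟩ := (Submodule.Quotient.mk_eq_zero _).1 h3
  rw [← hz]
  change algebraMap A B x ^ 1 • z ∈ _
  rw [pow_one, algebraMap_smul]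
  exact Submodule.smul_mem_smul hxm trivial

lemma ext_step {D E : Type u} [CommRing D] [IsDomain D] [CommRing E] [IsDomain E] [Algebra D E]
    [Algebra A D] [Algebra A E] [IsScalarTower A D E] [Algebra.IsIntegral D E]
    (hinj : Function.Injective (algebraMap D E))
    (hDy : ∀ y : E, ∃ s : D, s ≠ 0 ∧ ∃ m : D, algebraMap D E s * y = algebraMap D E m)
    (hfin : ∀ (L : Type u) [Field L] [Algebra D L] [IsFractionRing D L] [Algebra A L] [IsScalarTower A D L],
      Module.Finite A (IC D L)) : IsNoetherian A E := by
  let L := FractionRing E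
  have hinj' : ∀ d : D, d ≠ 0 → algebraMap E L (algebraMap D E d) ≠ 0 := by
    intro d hd h
    apply hd
    have h1 := (IsFractionRing.to_map_eq_zero_iff (K := L)).1 h
    exact hinj (h1.trans (map_zero _).symm)
  have hL : IsFractionRing D L := by
    have : FaithfulSMul D L := by
      rw [faithfulSMul_iff_algebraMap_injective, injective_iff_map_eq_zero]
      intro d hd
      by_contra h
      rw [IsScalarTower.algebraMap_apply D E L] at hd
      exact hinj' d h hd
    apply IsFractionRing.of_field D L
    intro z
    obtain ⟨y, y', hy', rfl⟩ := IsFractionRing.div_surjective (A := E) z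
    obtain ⟨s, hs, m, hm⟩ := hDy y
    obtain ⟨s', hs', m', hm'⟩ := hDy y'
    refine ⟨m * s', s * m', ?_⟩
    rw [IsScalarTower.algebraMap_apply D E L, IsScalarTower.algebraMap_apply D E L,
      map_mul (algebraMap D E), map_mul (algebraMap D E), ← hm, ← hm']
    have h1 := hinj' s hs
    have h2 := hinj' s' hs'
    have h3 : algebraMap E L y' ≠ 0 := by
      intro h
      exact nonZeroDivisors.ne_zero hy' ((IsFractionRing.to_map_eq_zero_iff (K := L)).1 h)
    simp only [map_mul]
    rw [div_eq_div_iff h3 (mul_ne_zero h1 (mul_ne_zero h2 h3))]; ring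
  have hICL : Module.Finite A (IC D L) := hfin L
  let φ : E →ₗ[A] IC D L :=
  { toFun := fun y => ⟨algebraMap _ L y,
      ((Algebra.IsIntegral.isIntegral (R := D) y).map (IsScalarTower.toAlgHom D E L))⟩
    map_add' := fun a b => Subtype.ext (map_add _ _ _)
    map_smul' := fun c a => Subtype.ext (by
      change algebraMap _ L (c • a) = c • algebraMap _ L a
      rw [Algebra.smul_def, Algebra.smul_def, map_mul, ← IsScalarTower.algebraMap_apply]) }
  refine isNoetherian_of_injective φ ?_
  intro a b hab
  exact IsFractionRing.injective E L (congrArg Subtype.val hab)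

set_option maxHeartbeats 4000000 in
theorem thmC (P : Ideal A) : ∀ (B : Type u) [CommRing B] [IsDomain B] [Algebra A B] [Module.Finite A B]
    (K : Type u) [Field K] [Algebra B K] [IsFractionRing B K] [Algebra A K] [IsScalarTower A B K],
    RingHom.ker (algebraMap A B) = P → Module.Finite A (IC B K) := by
  induction P using WellFoundedGT.induction with
  | ind P ih =>
  intro B _ _ _ _ K _ _ _ _ _ hP
  have hBN : IsNoetherianRing B := IsNoetherianRing.of_finite A B
  have hintA : Algebra.IsIntegral A B := Algebra.IsIntegral.of_finite A B
  by_cases hx : ∃ x ∈ maximalIdeal A, algebraMap A B x ≠ 0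
  · obtain ⟨x, hxm, hx0⟩ := hx
    refine fin_of_x ?_ hxm hx0
    intro q hq
    haveI := hq.prime
    obtain ⟨r, w, hw⟩ := resid hq
    let X : Set (IC B K ⧸ q) := (Ideal.Quotient.mk q) '' (w '' Set.Iio r)
    let D : Subalgebra B (IC B K ⧸ q) := Algebra.adjoin B X
    have hDfin : Module.Finite B D := ⟨(Submodule.fg_top _).2
      (fg_adjoin_of_finite (((Set.finite_Iio r).image _).image _)
        (fun x _ => Algebra.IsIntegral.isIntegral x))⟩
    have hDA : Module.Finite A D := Module.Finite.trans B D
    have hmD : ∀ m ∈ Submodule.span B (w '' Set.Iio r), Ideal.Quotient.mk q m ∈ D := by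
      intro m hm
      induction hm using Submodule.span_induction with
      | mem m hm => exact Algebra.subset_adjoin ⟨m, hm, rfl⟩
      | zero => rw [map_zero]; exact D.zero_mem
      | add a b _ _ ha hb => rw [map_add]; exact D.add_mem ha hb
      | smul a b _ hb => exact D.smul_mem hb a
    have hDy : ∀ y : IC B K ⧸ q, ∃ s : D, s ≠ 0 ∧ ∃ m : D, (s : IC B K ⧸ q) * y = m := by
      intro y
      obtain ⟨y, rfl⟩ := Ideal.Quotient.mk_surjective y
      obtain ⟨s, hs, m, hm, h⟩ := hw y
      refine ⟨algebraMap B D s, ?_, ⟨_, hmD m hm⟩, ?_⟩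
      · intro h0
        have : Ideal.Quotient.mk q (algebraMap B (IC B K) s) = 0 := congrArg Subtype.val h0
        exact hs (Ideal.Quotient.eq_zero_iff_mem.1 this)
      · change Ideal.Quotient.mk q (algebraMap B (IC B K) s) * Ideal.Quotient.mk q y = Ideal.Quotient.mk q m
        rw [← map_mul, Ideal.Quotient.mk_eq_mk_iff_sub_mem]
        exact h
    have hker : P < RingHom.ker (algebraMap A D) := by
      obtain ⟨b, hb0, hbq⟩ := exists_in_base hq
      have hle : P ≤ RingHom.ker (algebraMap A D) := by
        intro a ha
        rw [← hP, RingHom.mem_ker] at ha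
        rw [RingHom.mem_ker, IsScalarTower.algebraMap_apply A B D, ha, map_zero]
      refine lt_of_le_of_ne hle ?_
      intro heq
      have hint2 : Algebra.IsIntegral (Algebra.ofId A B).range B := Algebra.IsIntegral.tower_top A
      have hne : (Ideal.span {b}).comap (algebraMap (Algebra.ofId A B).range B) ≠ ⊥ :=
        Ideal.IsIntegral.comap_ne_bot _ (by simpa using hb0)
      obtain ⟨⟨_, a, rfl⟩, ha, ha0⟩ := Submodule.exists_mem_ne_zero_of_ne_bot hne
      have ha' : algebraMap A B a ∈ Ideal.span {b} := ha
      have ha0' : algebraMap A B a ≠ 0 := fun h => ha0 (Subtype.ext h)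
      apply ha0'
      have : a ∈ RingHom.ker (algebraMap A D) := by
        rw [RingHom.mem_ker]
        apply Subtype.ext
        change Ideal.Quotient.mk q (algebraMap A (IC B K) a) = 0
        rw [Ideal.Quotient.eq_zero_iff_mem, IsScalarTower.algebraMap_apply A B (IC B K)]
        obtain ⟨c, hc⟩ := Ideal.mem_span_singleton.1 ha'
        rw [hc, map_mul]
        exact q.mul_mem_right _ hbq
      rw [← heq, ← hP] at this
      exact this
    have hNA : IsNoetherian A (IC B K ⧸ q) := by
      have hint3 : Algebra.IsIntegral D (IC B K ⧸ q) := Algebra.IsIntegral.tower_top B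
      refine ext_step (A := A) (D := D) (E := IC B K ⧸ q) Subtype.val_injective hDy ?_
      intro L _ _ _ _ _
      exact ih _ hker D L rfl
    have hNB : IsNoetherian B (IC B K ⧸ q) := isNoetherian_of_tower A hNA
    exact isNoetherian_of_linearEquiv (Submodule.Quotient.restrictScalarsEquiv B q).symm
  · push Not at hx
    have hker : RingHom.ker (algebraMap A B) = maximalIdeal A := by
      refine ((maximalIdeal.isMaximal A).eq_of_le (RingHom.ker_ne_top _) ?_).symm
      intro a ha
      exact hx a ha
    have hmax : (⊥ : Ideal B).IsMaximal := by
      apply Ideal.isMaximal_of_isIntegral_of_isMaximal_comap (R := A)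
      rw [← RingHom.ker_eq_comap_bot, hker]
      infer_instance
    have hBf : IsField B := by
      by_contra h
      exact Ring.ne_bot_of_isMaximal_of_not_isField hmax h rfl
    have hs : Function.Surjective (algebraMap B K) := IsFractionRing.surjective_iff_isField.2 hBf
    refine Module.Finite.of_surjective ((Algebra.linearMap B (IC B K)).restrictScalars A) ?_
    rintro ⟨y, hy⟩
    obtain ⟨b, rfl⟩ := hs y
    exact ⟨b, rfl⟩
end P11a
end Pf

namespace Pf
universe u v
section P12a
variable (R : Type u) [CommRing R] [IsLocalRing R] [IsNoetherianRing R]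

lemma exists_approx (y : AdicCompletion (maximalIdeal R) R) :
    ∃ r : R, y - algebraMap R _ r ∈ maximalIdeal (AdicCompletion (maximalIdeal R) R) := by
  obtain ⟨r, hr⟩ := Ideal.Quotient.mk_surjective (AdicCompletion.evalOneₐ (maximalIdeal R) y)
  refine ⟨r, ?_⟩
  rw [AdicCompletion.maximalIdeal_eq_map, ← AdicCompletion.ker_evalOneₐ_eq_map _ (maximalIdeal R).fg_of_isNoetherianRing,
    RingHom.mem_ker]
  change AdicCompletion.evalOneₐ (maximalIdeal R) (y - algebraMap R _ r) = 0
  rw [map_sub, ← hr, AlgHom.commutes]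
  exact sub_self _

theorem noeth_completion : IsNoetherianRing (AdicCompletion (maximalIdeal R) R) := by
  obtain ⟨r, a, ha⟩ := Submodule.fg_iff_exists_fin_generating_family.1 (maximalIdeal R).fg_of_isNoetherianRing
  let T := MvPolynomial (Fin r) R
  let V : Ideal T := MvPolynomial.idealOfVars (Fin r) R
  let g : T →+* R := (MvPolynomial.aeval (R := R) a).toRingHom
  have hg : V.map g = maximalIdeal R := by
    have : V = Ideal.span (Set.range MvPolynomial.X) := rfl
    rw [this, Ideal.map_span, ← Set.range_comp, ← ha]
    change Ideal.span _ = Ideal.span _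
    congr 2
    ext i
    exact MvPolynomial.aeval_X a i
  have hPN : IsNoetherianRing (AdicCompletion V T) :=
    isNoetherianRing_of_ringEquiv (MvPowerSeries (Fin r) R)
      (MvPowerSeries.toAdicCompletionAlgEquiv (Fin r) R).toRingEquiv
  have hle : ∀ n : ℕ, V ^ n ≤ (maximalIdeal R ^ n).comap g := by
    intro n
    rw [← Ideal.map_le_iff_le_comap, Ideal.map_pow, hg]
  let F : (n : ℕ) → AdicCompletion V T →+* R ⧸ maximalIdeal R ^ n := fun n =>
    (Ideal.quotientMap (maximalIdeal R ^ n) g (hle n)).comp (AdicCompletion.evalₐ V n : AdicCompletion V T →+* T ⧸ V ^ n)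
  have hF : ∀ n (x : AdicCompletion V T), F n x =
    Ideal.quotientMap (maximalIdeal R ^ n) g (hle n) (AdicCompletion.evalₐ V n x) := fun n x => rfl
  have hcomp : ∀ {m n : ℕ} (hmn : m ≤ n), (Ideal.Quotient.factorPow (maximalIdeal R) hmn).comp (F n) = F m := by
    intro m n hmn
    ext x
    obtain ⟨x, rfl⟩ := AdicCompletion.mk_surjective V T x
    rw [RingHom.comp_apply, hF, hF]
    rw [AdicCompletion.evalₐ_mk, AdicCompletion.evalₐ_mk, Ideal.quotientMap_mk, Ideal.quotientMap_mk]
    change Ideal.Quotient.mk _ _ = Ideal.Quotient.mk _ _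
    rw [Ideal.Quotient.mk_eq_mk_iff_sub_mem, ← map_sub]
    apply hle m
    rw [← Ideal.Quotient.mk_eq_mk_iff_sub_mem]
    exact (AdicCompletion.Ideal.mk_eq_mk V hmn x)
  let f : AdicCompletion V T →+* AdicCompletion (maximalIdeal R) R :=
    AdicCompletion.liftRingHom (maximalIdeal R) F hcomp
  have hf : ∀ t, f (algebraMap T _ t) = algebraMap R _ (g t) := by
    intro t
    apply AdicCompletion.ext_evalₐ
    intro n
    rw [AdicCompletion.evalₐ_liftRingHom (maximalIdeal R) F hcomp, hF]
    rw [AlgHom.commutes, AlgHom.commutes]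
    rfl
  have hPc : IsAdicComplete (V.map (algebraMap T (AdicCompletion V T))) (AdicCompletion V T) :=
    AdicCompletion.isAdicComplete_self V (MvPolynomial.idealOfVars_fg _ _)
  have hmap : (V.map (algebraMap T (AdicCompletion V T))).map f =
      maximalIdeal (AdicCompletion (maximalIdeal R) R) := by
    have e := congrArg (Ideal.map (algebraMap R (AdicCompletion (maximalIdeal R) R))) hg
    rw [AdicCompletion.maximalIdeal_eq_map, ← e, Ideal.map_map, Ideal.map_map]
    congr 1
  have hH : IsHausdorff ((V.map (algebraMap T (AdicCompletion V T))).map f)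
    (AdicCompletion (maximalIdeal R) R) := by rw [hmap]; infer_instance
  have hs : Function.Surjective f := by
    refine surjective_of_mk_map_comp_surjective (I := V.map (algebraMap T (AdicCompletion V T))) f ?_
    intro y
    obtain ⟨y, rfl⟩ := Ideal.Quotient.mk_surjective y
    obtain ⟨r, hr⟩ := exists_approx R y
    refine ⟨algebraMap T _ (MvPolynomial.C r), ?_⟩
    change Ideal.Quotient.mk _ (f _) = _
    rw [hf, eq_comm, Ideal.Quotient.mk_eq_mk_iff_sub_mem, hmap]
    have : g (MvPolynomial.C r) = r := MvPolynomial.aeval_C a r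
    rw [this]; exact hr
  exact isNoetherianRing_of_surjective _ _ f hs
end P12a
end Pf

namespace Pf
universe u v
section descent

theorem finite_descent (R C : Type u) [CommRing R] [CommRing C] [Algebra R C]
    [Module.FaithfullyFlat R C] [IsReduced C] [IsNoetherianRing C]
    (hfin : ∀ (P : Ideal C) [P.IsPrime], Module.Finite C (IC (C ⧸ P) (FractionRing (C ⧸ P)))) :
    Module.Finite R (integralClosure R (FractionRing R)) := by
  classical
  haveI : Finite ↥(minimalPrimes C) := (minimalPrimes.finite_of_isNoetherianRing C).to_subtype
  haveI hpr : ∀ i : ↥(minimalPrimes C), (i : Ideal C).IsPrime := fun i => Ideal.minimalPrimes_isPrime i.2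
  let f : ∀ i : ↥(minimalPrimes C), R →+* (C ⧸ (i : Ideal C)) := fun i =>
    (Ideal.Quotient.mk (i : Ideal C)).comp (algebraMap R C)
  have hnz : ∀ (i : ↥(minimalPrimes C)) (x : R), x ∈ nonZeroDivisors R → f i x ≠ 0 := by
    intro i x hx h0
    have h1 : algebraMap R C x ∈ (i : Ideal C) := Ideal.Quotient.eq_zero_iff_mem.mp h0
    have h2 : algebraMap R C x ∈ nonZeroDivisors C := by
      have := Module.Flat.isSMulRegular_of_nonZeroDivisors (M := C) hx
      rw [mem_nonZeroDivisors_iff_right]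
      intro z hz
      apply this
      simp only [Algebra.smul_def, smul_zero]
      rw [mul_comm, hz, mul_zero]
    exact Set.disjoint_left.mp (Ideal.disjoint_nonZeroDivisors_of_mem_minimalPrimes i.2) h1 h2
  have hu : ∀ (i : ↥(minimalPrimes C)) (y : nonZeroDivisors R),
      IsUnit (((algebraMap (C ⧸ (i : Ideal C)) (FractionRing (C ⧸ (i : Ideal C)))).comp (f i)) y) := by
    intro i y
    apply IsUnit.mk0
    intro h
    apply hnz i y y.2
    apply IsFractionRing.injective (C ⧸ (i : Ideal C)) (FractionRing (C ⧸ (i : Ideal C)))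
    rw [map_zero]; exact h
  let ψ : ∀ i : ↥(minimalPrimes C), FractionRing R →+* FractionRing (C ⧸ (i : Ideal C)) := fun i =>
    IsLocalization.lift (M := nonZeroDivisors R) (hu i)
  have hψ : ∀ (i : ↥(minimalPrimes C)) (r : R), ψ i (algebraMap R (FractionRing R) r) =
      algebraMap (C ⧸ (i : Ideal C)) (FractionRing (C ⧸ (i : Ideal C))) (f i r) := fun i r =>
    IsLocalization.lift_eq (hu i) r
  let g : integralClosure R (FractionRing R) →
      (∀ i : ↥(minimalPrimes C), IC (C ⧸ (i : Ideal C)) (FractionRing (C ⧸ (i : Ideal C)))) :=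
    fun s i => ⟨ψ i s.1, IsIntegral.map_of_comp_eq (f i) (ψ i)
      (by ext r; exact (hψ i r).symm) s.2⟩
  haveI : ∀ i : ↥(minimalPrimes C),
      Module.Finite C (IC (C ⧸ (i : Ideal C)) (FractionRing (C ⧸ (i : Ideal C)))) := fun i => hfin i
  haveI : IsNoetherian C
      (∀ i : ↥(minimalPrimes C), IC (C ⧸ (i : Ideal C)) (FractionRing (C ⧸ (i : Ideal C)))) :=
    isNoetherian_of_isNoetherianRing_of_finite C _
  obtain ⟨s', hs', hspan⟩ := (Submodule.fg_span_iff_fg_span_finset_subset (R := C) (Set.range g)).mp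
    (IsNoetherian.noetherian _)
  have : ∀ t : s', ∃ w, g w = t := fun t => hs' t.2
  choose w hw using this
  refine ⟨⟨Finset.univ.image w, ?_⟩⟩
  rw [eq_top_iff]
  rintro z -
  have hz : g z ∈ Submodule.span C (Set.range (fun t : s' => (t : ∀ i : ↥(minimalPrimes C),
      IC (C ⧸ (i : Ideal C)) (FractionRing (C ⧸ (i : Ideal C)))))) := by
    have h1 : g z ∈ Submodule.span C (s' : Set _) := hspan ▸ Submodule.subset_span ⟨z, rfl⟩
    simpa using h1
  obtain ⟨c, hc⟩ := (Submodule.mem_span_range_iff_exists_fun C).mp hz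
  obtain ⟨b, hb⟩ := IsLocalization.exist_integer_multiples_of_finite (nonZeroDivisors R)
    (fun o : Option s' => (o.elim z.1 (fun t => (w t).1) : FractionRing R))
  choose ρ hρ using hb
  have hz' : algebraMap R (FractionRing R) (ρ none) = (b : R) • z.1 := hρ none
  have hw' : ∀ t, algebraMap R (FractionRing R) (ρ (some t)) = (b : R) • (w t).1 :=
    fun t => hρ (some t)
  have key : algebraMap R C (ρ none) = ∑ t, c t * algebraMap R C (ρ (some t)) := by
    rw [← sub_eq_zero]
    have : algebraMap R C (ρ none) - ∑ t, c t * algebraMap R C (ρ (some t)) ∈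
        sInf (minimalPrimes C) := by
      rw [Ideal.mem_sInf]
      intro I hI
      have hcI := congrArg (fun y => (y ⟨I, hI⟩).1) hc
      haveI : I.IsPrime := hpr ⟨I, hI⟩
      have e1 : ∀ (y : integralClosure R (FractionRing R)) (r : R),
          algebraMap R (FractionRing R) r = (b : R) • y.1 →
          algebraMap (C ⧸ I) (FractionRing (C ⧸ I)) (Ideal.Quotient.mk I (algebraMap R C r)) =
          algebraMap (C ⧸ I) (FractionRing (C ⧸ I)) (Ideal.Quotient.mk I (algebraMap R C b)) *
            (g y ⟨I, hI⟩).1 := by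
        intro y r h
        have := congrArg (ψ ⟨I, hI⟩) h
        rw [hψ, Algebra.smul_def, map_mul, hψ] at this
        exact this
      rw [← Ideal.Quotient.eq_zero_iff_mem]
      apply IsFractionRing.injective (C ⧸ I) (FractionRing (C ⧸ I))
      rw [map_zero, map_sub, map_sub, map_sum, map_sum, e1 z _ hz', sub_eq_zero, ← hcI]
      simp only [Finset.sum_apply, Pi.smul_apply, AddSubmonoidClass.coe_finset_sum, map_mul]
      rw [Finset.mul_sum]
      refine Finset.sum_congr rfl fun t _ => ?_
      rw [e1 (w t) _ (hw' t), hw t]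
      have : ((c t • (t : ∀ i : ↥(minimalPrimes C),
          IC (C ⧸ (i : Ideal C)) (FractionRing (C ⧸ (i : Ideal C)))) ⟨I, hI⟩ :
          IC (C ⧸ I) (FractionRing (C ⧸ I))) : FractionRing (C ⧸ I)) =
          algebraMap (C ⧸ I) (FractionRing (C ⧸ I)) (Ideal.Quotient.mk I (c t)) *
          ((t : ∀ i : ↥(minimalPrimes C),
          IC (C ⧸ (i : Ideal C)) (FractionRing (C ⧸ (i : Ideal C)))) ⟨I, hI⟩).1 := by
        rw [← Ideal.Quotient.algebraMap_eq, ← IsScalarTower.algebraMap_apply, ← Algebra.smul_def]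
        rfl
      erw [this]
      ring
    have h3 : sInf (minimalPrimes C) = (⊥ : Ideal C) :=
      (Ideal.sInf_minimalPrimes (I := (⊥ : Ideal C))).trans (nilradical_eq_zero C)
    have h4 := h3.le this
    exact h4
  have hmem : ρ none ∈ Ideal.span (Set.range fun t => ρ (some t)) := by
    rw [← Ideal.comap_map_eq_self_of_faithfullyFlat (B := C)
      (Ideal.span (Set.range fun t => ρ (some t))), Ideal.mem_comap, key]
    exact Ideal.sum_mem _ fun t _ => Ideal.mul_mem_left _ _ (Ideal.mem_map_of_mem _
      (Ideal.subset_span ⟨t, rfl⟩))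
  obtain ⟨a, ha⟩ := Ideal.mem_span_range_iff_exists_fun.mp hmem
  have hfinal : z = ∑ t, a t • w t := by
    apply Subtype.ext
    have hbu : IsUnit (algebraMap R (FractionRing R) b) := IsLocalization.map_units _ b
    apply hbu.mul_left_cancel
    rw [← Algebra.smul_def, ← hz', ← ha, map_sum]
    simp only [AddSubmonoidClass.coe_finset_sum, map_mul, hw', Finset.mul_sum]
    refine Finset.sum_congr rfl fun t _ => ?_
    change _ = _ * (a t • (w t).1)
    simp only [Algebra.smul_def]
    ring
  rw [hfinal]
  refine Submodule.sum_mem _ fun t _ => Submodule.smul_mem _ _ (Submodule.subset_span ?_)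
  simp

end descent
end Pf

-- STATEMENT 1
theorem stmt1 (R : Type) [CommRing R] [IsLocalRing R] [IsNoetherianRing R]
    (hau : AnalyticallyUnramified R)
    (hid : HasFiniteInjDim R ↥(conductorIdeal R)) :
    IsNormalRing R ∧ IsGorensteinLocal R := by
  haveI : IsReduced (AdicCompletion (maximalIdeal R) R) := hau
  haveI : IsNoetherianRing (AdicCompletion (maximalIdeal R) R) := Pf.noeth_completion R
  haveI : Module.Flat R (AdicCompletion (maximalIdeal R) R) := AdicCompletion.flat_of_isNoetherian _
  haveI : Module.FaithfullyFlat R (AdicCompletion (maximalIdeal R) R) :=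
    Module.FaithfullyFlat.of_flat_of_isLocalHom
  have hfin : Module.Finite R (IntClosure R) :=
    Pf.finite_descent R (AdicCompletion (maximalIdeal R) R) (fun P _ =>
      Pf.thmC P _ _ (by rw [Ideal.Quotient.algebraMap_eq, Ideal.mk_ker]))
  exact Pf.stmt_of_finite (Pf.reduced_of_au hau) hfin hid
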